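/- arXiv:1312.4597 — 2 statements merged into one kernel-verified Lean document; each statement's English description precedes it below -/
import Mathlib

section
/- Let S be a convex polygon with at least four sides, contained in the closed unit disc centered at the origin, with 0 ∈ S. Let v_1, …, v_n be the vertices of −S in clockwise order, and for each i let E^i = {λ(v_{i−1} − v_i) + μ(v_{i+1} − v_i) : λ, μ ≥ 0} be the wedge of −S at v_i. Suppose v_a and v_b are non-adjacent vertices of −S at which, for some direction d not parallel to any side of S, the two supporting lines of −S parallel to d touch −S. Then for all integers k, l ≥ 1 and every δ > 0 there exist a finite indexed family X of positive homothetic copies of S, a finite indexed family A of translates of the wedge E^a, and a finite indexed family B of translates of the wedge E^b, all contained in a single disc of radius δ, such that: (i) every member of A intersects exactly k members of X and every member of B intersects exactly l members of X; and (ii) for every 2-coloring of the members of X by red and blue, either some member of A intersects only red members of X, or some member of B intersects only blue members of X. -/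
/-!
STATEMENT 6: For a convex polygon S with at least four sides contained in the
closed unit disc with 0 ∈ S, with the vertices v_1, …, v_n of −S in cyclic
order, wedges E^i at the vertices, and two non-adjacent vertices v_a, v_b
touched by the two supporting lines of −S parallel to a direction d not
parallel to any side: for all k, l ≥ 1 and δ > 0 there are finite families X
of positive homothetic copies of S, A of translates of the wedge E^a and B of
translates of the wedge E^b, with all members of X and all apices of the
wedges inside a single disc of radius δ, such that every member of A meets
exactly k members of X, every member of B meets exactly l members of X, and
for every red/blue coloring of X some member of A meets only red members of X
or some member of B meets only blue members of X.
-/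

noncomputable section

open scoped RealInnerProductSpace

abbrev Plane : Type := EuclideanSpace ℝ (Fin 2)

/-- The homothetic copy `ε·S + p` of a set `S ⊆ ℝ²`. -/
def homCopy (ε : ℝ) (p : Plane) (S : Set Plane) : Set Plane :=
  (fun x => ε • x + p) '' S

/-- Every point of the finite set `P` is an extreme point of its convex hull. -/
def StrictlyConvexPosition (P : Finset Plane) : Prop :=
  ∀ p ∈ P, p ∈ Set.extremePoints ℝ (convexHull ℝ (P : Set Plane))

/-- The reflection of a set through the origin. -/
def negSet (S : Set Plane) : Set Plane := (fun x => -x) '' S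

/-- The convex wedge (cone) with apex at the origin spanned by the directions
`w₁` and `w₂`. -/
def wedge (w₁ w₂ : Plane) : Set Plane :=
  {x | ∃ lam mu : ℝ, 0 ≤ lam ∧ 0 ≤ mu ∧ x = lam • w₁ + mu • w₂}

/-!
Write `m + K` for the supporting cone of `-S` at a vertex `m`. A homothet `ε • S + p` meets the
translate `K + q` if and only if its vertex `p - ε • m` lies in `K + q`. For the incidences with
translates of the cones at `a` and `b`, a homothet is therefore a pair of points differing by
`ε • (a - b)`, and any configuration may be scaled down at will.

The configurations are built by induction on `k + l`, starting from a single cone which meets no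
homothet when `k = 0` or `l = 0`. Place a tiny configuration for `(k, l + 1)` near `0` and a tiny
configuration for `(k + 1, l)` near a point `D`, so far apart that their members do not meet each
other's cones, and add one homothet which meets precisely the `a`-cones of the former and the
`b`-cones of the latter. If this homothet is red, apply the coloring property of the first
configuration, where the `a`-cones have gained a red member; if it is blue, that of the second.

To find the new homothet, put `e = a - b` and use coordinates `c • d + s • e` in the plane spanned
by `d` and `e`. As neither cone contains `d` or `-d`, the cone at `b` is the region above the two
rays of slopes `α` (for `c > 0`) and `β` (for `c < 0`), and the cone at `a` is the region below two
rays of slopes `-γ` and `-γ'`. With `D = (α + β) • d`, the boundaries of the `b`-cones at `0` and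
`D` cross above `β • d`, and it suffices to compare there the boundaries of the `a`-cones at `0`
and `D`. After possibly replacing `d` by `-d`, the former is the higher one.
-/

section Colorings

variable {ι κ α β α' β' : Type*} {k l : ℕ}

/-- Two hypergraphs on the vertex set `ι`, given by the incidence relations `RA` (with edges
indexed by `α`) and `RB` (with edges indexed by `β`), are `k`-uniform and `l`-uniform, and every
coloring of `ι` with the colors red (`true`) and blue (`false`) has a red `RA`-edge or a blue
`RB`-edge. -/
def IsForcing (RA : ι → α → Prop) (RB : ι → β → Prop) (k l : ℕ) : Prop :=
  (∀ j, Nat.card {i | RA i j} = k) ∧ (∀ j, Nat.card {i | RB i j} = l) ∧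
    ∀ red : ι → Bool, (∃ j, ∀ i, RA i j → red i = true) ∨ ∃ j, ∀ i, RB i j → red i = false

lemma isForcing_zero_left [IsEmpty ι] [Nonempty α] [IsEmpty β] (RA : ι → α → Prop)
    (RB : ι → β → Prop) (l : ℕ) : IsForcing RA RB 0 l :=
  ⟨fun _ => Nat.card_of_isEmpty, isEmptyElim, fun _ => .inl ⟨Classical.arbitrary α, isEmptyElim⟩⟩

lemma isForcing_zero_right [IsEmpty ι] [IsEmpty α] [Nonempty β] (RA : ι → α → Prop)
    (RB : ι → β → Prop) (k : ℕ) : IsForcing RA RB k 0 :=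
  ⟨isEmptyElim, fun _ => Nat.card_of_isEmpty, fun _ => .inr ⟨Classical.arbitrary β, isEmptyElim⟩⟩

lemma natCard_setOf_sum [Finite ι] [Finite κ] (Q : ι ⊕ κ → Prop) :
    Nat.card {i | Q i} = Nat.card {i | Q (.inl i)} + Nat.card {i | Q (.inr i)} :=
  (Nat.card_congr Equiv.subtypeSum).trans Nat.card_sum

lemma IsForcing.glue [Finite ι] [Finite κ] {RA : (ι ⊕ κ) ⊕ Unit → α ⊕ α' → Prop}
    {RB : (ι ⊕ κ) ⊕ Unit → β ⊕ β' → Prop}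
    (h₁ : IsForcing (fun i j => RA (.inl (.inl i)) (.inl j))
      (fun i j => RB (.inl (.inl i)) (.inl j)) k (l + 1))
    (h₂ : IsForcing (fun i j => RA (.inl (.inr i)) (.inr j))
      (fun i j => RB (.inl (.inr i)) (.inr j)) (k + 1) l)
    (hA₁₂ : ∀ i j, ¬ RA (.inl (.inl i)) (.inr j)) (hA₂₁ : ∀ i j, ¬ RA (.inl (.inr i)) (.inl j))
    (hB₁₂ : ∀ i j, ¬ RB (.inl (.inl i)) (.inr j)) (hB₂₁ : ∀ i j, ¬ RB (.inl (.inr i)) (.inl j))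
    (hA₁ : ∀ j, RA (.inr ()) (.inl j)) (hA₂ : ∀ j, ¬ RA (.inr ()) (.inr j))
    (hB₁ : ∀ j, ¬ RB (.inr ()) (.inl j)) (hB₂ : ∀ j, RB (.inr ()) (.inr j)) :
    IsForcing RA RB (k + 1) (l + 1) := by
  refine ⟨?_, ?_, fun red => ?_⟩
  · rintro (j | j) <;> rw [natCard_setOf_sum, natCard_setOf_sum]
    · simp [h₁.1 j, hA₂₁, hA₁]
    · simp [h₂.1 j, hA₁₂, hA₂]
  · rintro (j | j) <;> rw [natCard_setOf_sum, natCard_setOf_sum]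
    · simp [h₁.2.1 j, hB₂₁, hB₁]
    · simp [h₂.2.1 j, hB₁₂, hB₂]
  · cases hred : red (.inr ())
    · rcases h₂.2.2 fun i => red (.inl (.inr i)) with ⟨j, hj⟩ | ⟨j, hj⟩
      · exact .inl ⟨.inr j, by rintro ((i | i) | ⟨⟩) <;> simp_all⟩
      · exact .inr ⟨.inr j, by rintro ((i | i) | ⟨⟩) <;> simp_all⟩
    · rcases h₁.2.2 fun i => red (.inl (.inl i)) with ⟨j, hj⟩ | ⟨j, hj⟩
      · exact .inl ⟨.inl j, by rintro ((i | i) | ⟨⟩) <;> simp_all⟩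
      · exact .inr ⟨.inl j, by rintro ((i | i) | ⟨⟩) <;> simp_all⟩

end Colorings

section Cones

variable {V : Type*} [NormedAddCommGroup V] [NormedSpace ℝ V] {K Ka Kb : ConvexCone ℝ V}
  {S : Set V} {d e D m z : V} {ε : ℝ}

/-- The closed cone `K` contains `e` in its interior and neither of the two rays
spanned by `d` and `-d`. -/
structure IsTransverse (K : ConvexCone ℝ V) (d e : V) : Prop where
  isClosed : IsClosed (K : Set V)
  mem_interior : e ∈ interior (K : Set V)
  notMem : d ∉ K
  neg_notMem : -d ∉ K

lemma IsTransverse.neg (h : IsTransverse K d e) : IsTransverse K (-d) e :=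
  ⟨h.isClosed, h.mem_interior, h.neg_notMem, (neg_neg d).symm ▸ h.notMem⟩

open scoped Pointwise in
lemma add_smul_mem_interior_cone {x : V} (hx : x ∈ K) (he : e ∈ interior (K : Set V)) {r : ℝ}
    (hr : 0 < r) : x + r • e ∈ interior (K : Set V) := by
  have hre : r • e ∈ interior (r • (K : Set V)) := by
    rw [interior_smul₀ hr.ne']
    exact Set.smul_mem_smul_set he
  have hsub : (K : Set V) + r • (K : Set V) ⊆ K := by
    rintro _ ⟨y, hy, _, ⟨w, hw, rfl⟩, rfl⟩
    exact K.add_mem hy (K.smul_mem hr hw)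
  exact interior_mono hsub (subset_interior_add_right (Set.add_mem_add hx hre))

lemma exists_add_smul_mem_cone (he : e ∈ interior (K : Set V)) (d : V) :
    ∃ s : ℝ, d + s • e ∈ K := by
  have hc : ContinuousAt (fun r : ℝ => e + r • d) 0 := by fun_prop
  have hev : ∀ᶠ r : ℝ in nhdsWithin 0 (Set.Ioi 0), e + r • d ∈ K :=
    (hc.eventually_mem (by simpa using mem_interior_iff_mem_nhds.1 he)).filter_mono inf_le_left
  obtain ⟨r, hr, hr0 : 0 < r⟩ := (hev.and self_mem_nhdsWithin).exists
  refine ⟨r⁻¹, ?_⟩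
  have := K.smul_mem (inv_pos.2 hr0) hr
  rwa [smul_add, inv_smul_smul₀ hr0.ne', add_comm] at this

/-- In the open half-plane of the points `c • d + s • e` with `c > 0`, the cone `K` consists of the
points on and above the ray of slope `α > 0`. -/
def IsSlope (K : ConvexCone ℝ V) (d e : V) (α : ℝ) : Prop :=
  0 < α ∧ ∀ c : ℝ, 0 < c → ∀ s : ℝ, c • d + s • e ∈ K ↔ c * α ≤ s

lemma IsTransverse.exists_isSlope (h : IsTransverse K d e) : ∃ α, IsSlope K d e α := by
  set T : Set ℝ := {s | d + s • e ∈ K}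
  have hT : IsClosed T := h.isClosed.preimage (f := fun s : ℝ => d + s • e) (by fun_prop)
  have hup : ∀ s ∈ T, ∀ t, s ≤ t → t ∈ T := by
    intro s hs t hst
    rcases hst.eq_or_lt with rfl | hst
    · exact hs
    · have := K.add_mem hs (K.smul_mem (sub_pos.2 hst) (interior_subset h.mem_interior))
      rwa [add_assoc, ← add_smul, add_sub_cancel] at this
  have hpos : ∀ s ∈ T, 0 < s := fun s hs => by
    by_contra! hs0
    exact h.notMem (by simpa [T] using hup s hs 0 hs0)
  have hbdd : BddBelow T := ⟨0, fun s hs => (hpos s hs).le⟩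
  have hmem : sInf T ∈ T := hT.csInf_mem (exists_add_smul_mem_cone h.mem_interior d) hbdd
  refine ⟨sInf T, hpos _ hmem, fun c hc s => ?_⟩
  have hscale : c • d + s • e = c • (d + (s / c) • e) := by
    rw [smul_add, smul_smul, mul_div_cancel₀ s hc.ne']
  rw [hscale, K.smul_mem_iff hc, mul_comm, ← le_div_iff₀ hc]
  exact ⟨fun hs => csInf_le hbdd hs, hup _ hmem _⟩

lemma IsSlope.mem_interior {α c s : ℝ} (hα : IsSlope K d e α) (he : e ∈ interior (K : Set V))
    (hc : 0 < c) (hs : c * α < s) : c • d + s • e ∈ interior (K : Set V) := by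
  have := add_smul_mem_interior_cone ((hα.2 c hc _).2 le_rfl) he (sub_pos.2 hs)
  rwa [add_assoc, ← add_smul, add_sub_cancel] at this

/-- Relative positions for the inductive step. Two clusters of points lie near `0` and near `D`, and
a homothet has its two relevant vertices at `z - ε • e` and `z`. Its first vertex lies in the cone
`Ka` placed at `0` but not in the one placed at `D`, its second vertex lies in the cone `Kb` placed
at `D` but not in the one placed at `0`, and no cone placed at one cluster meets the other one. -/
structure IsGadget (Ka Kb : ConvexCone ℝ V) (e D z : V) (ε : ℝ) : Prop where
  fst_mem : z - ε • e ∈ interior (Ka : Set V)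
  fst_sub_notMem : z - ε • e - D ∉ Ka
  snd_notMem : z ∉ Kb
  snd_sub_mem : z - D ∈ interior (Kb : Set V)
  notMem_left : D ∉ Ka
  neg_notMem_left : -D ∉ Ka
  notMem_right : D ∉ Kb
  neg_notMem_right : -D ∉ Kb

/-- The vertex `β • d + (α * β) • e` lies on the boundaries of `Kb` and of `(α + β) • d + Kb`.
Displacing it and the second cluster slightly against `e` makes all conditions strict. -/
lemma exists_isGadget_of_isSlope {α β γ γ' : ℝ} (hea : -e ∈ interior (Ka : Set V))
    (heb : e ∈ interior (Kb : Set V)) (hα : IsSlope Kb d e α) (hβ : IsSlope Kb (-d) e β)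
    (hγ : IsSlope Ka d (-e) γ) (hγ' : IsSlope Ka (-d) (-e) γ') (hle : β * γ ≤ α * γ') :
    ∃ D z, ∃ ε > 0, IsGadget Ka Kb e D z ε := by
  have hα0 := hα.1
  have hβ0 := hβ.1
  have hγ0 := hγ.1
  have hαβ : 0 < α + β := by positivity
  obtain ⟨η, hη, hηlt⟩ := exists_between
    (show 0 < min ((α + β) * γ) ((α + β) * β) by positivity)
  obtain ⟨hηγ, hηβ⟩ := lt_min_iff.1 hηlt
  refine ⟨(α + β) • d - η • e, β • d + (α * β - η / 2) • e, β * (α + γ), by positivity, ?_⟩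
  constructor
  · convert hγ.mem_interior hea hβ0 (s := β * γ + η / 2) (by linarith) using 1
    module
  · have := mt (hγ'.2 α hα0 (β * γ - η / 2)).1 (by linarith)
    convert this using 2
    module
  · exact mt (hα.2 β hβ0 _).1 (by linarith)
  · convert hβ.mem_interior heb hα0 (s := α * β + η / 2) (by linarith) using 1
    module
  · have := mt (hγ.2 _ hαβ η).1 (by linarith)
    convert this using 2
    module
  · have := mt (hγ'.2 _ hαβ (-η)).1 (by nlinarith [hγ'.1])
    convert this using 2
    module
  · have := mt (hα.2 _ hαβ (-η)).1 (by nlinarith)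
    convert this using 2
    module
  · have := mt (hβ.2 _ hαβ η).1 (by linarith)
    convert this using 2
    module

lemma exists_isGadget (ha : IsTransverse Ka d (-e)) (hb : IsTransverse Kb d e) :
    ∃ D z, ∃ ε > 0, IsGadget Ka Kb e D z ε := by
  obtain ⟨α, hα⟩ := hb.exists_isSlope
  obtain ⟨β, hβ⟩ := hb.neg.exists_isSlope
  obtain ⟨γ, hγ⟩ := ha.exists_isSlope
  obtain ⟨γ', hγ'⟩ := ha.neg.exists_isSlope
  rcases le_total (β * γ) (α * γ') with hle | hle
  · exact exists_isGadget_of_isSlope ha.mem_interior hb.mem_interior hα hβ hγ hγ' hle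
  · rw [← neg_neg d] at hα hγ
    exact exists_isGadget_of_isSlope ha.mem_interior hb.mem_interior hβ hα hγ' hγ hle

lemma IsGadget.eventually (h : IsGadget Ka Kb e D z ε) (hKa : IsClosed (Ka : Set V))
    (hKb : IsClosed (Kb : Set V)) :
    ∀ᶠ p : V × V in nhds (D, z), IsGadget Ka Kb e p.1 p.2 ε := by
  have hopen : ∀ {U : Set V} {F : V × V → V}, IsOpen U → Continuous F → F (D, z) ∈ U →
      ∀ᶠ p in nhds (D, z), F p ∈ U := fun hU hF hmem =>
    hF.continuousAt.eventually_mem (hU.mem_nhds hmem)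
  filter_upwards [hopen (F := fun p => p.2 - ε • e) isOpen_interior (by fun_prop) h.fst_mem,
    hopen (F := fun p => p.2 - ε • e - p.1) hKa.isOpen_compl (by fun_prop) h.fst_sub_notMem,
    hopen hKb.isOpen_compl continuous_snd h.snd_notMem,
    hopen (F := fun p => p.2 - p.1) isOpen_interior (by fun_prop) h.snd_sub_mem,
    hopen hKa.isOpen_compl continuous_fst h.notMem_left,
    hopen hKa.isOpen_compl continuous_fst.neg h.neg_notMem_left,
    hopen hKb.isOpen_compl continuous_fst h.notMem_right,
    hopen hKb.isOpen_compl continuous_fst.neg h.neg_notMem_right] with p h₁ h₂ h₃ h₄ h₅ h₆ h₇ h₈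
  exact ⟨h₁, h₂, h₃, h₄, h₅, h₆, h₇, h₈⟩

lemma IsGadget.exists_forall_near (h : IsGadget Ka Kb e D z ε) (hKa : IsClosed (Ka : Set V))
    (hKb : IsClosed (Kb : Set V)) :
    ∃ ρ > 0, ∀ x y w : V, ‖x‖ < ρ → ‖y‖ < ρ → ‖w‖ < ρ →
      IsGadget Ka Kb e (D + (x - y)) (z - w) ε := by
  obtain ⟨ρ, hρ, hball⟩ := Metric.eventually_nhds_iff.1 (h.eventually hKa hKb)
  refine ⟨ρ / 2, half_pos hρ, fun x y w hx hy hw => @hball (D + (x - y), z - w) ?_⟩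
  rw [Prod.dist_eq, max_lt_iff, dist_self_add_left, dist_self_sub_left]
  exact ⟨by linarith [norm_sub_le x y], by linarith⟩

lemma eventually_norm_smul_lt {ι E : Type*} [Finite ι] [NormedAddCommGroup E] [NormedSpace ℝ E]
    (x : ι → E) {ρ : ℝ} (hρ : 0 < ρ) :
    ∀ᶠ r : ℝ in nhdsWithin 0 (Set.Ioi 0), ∀ i, ‖r • x i‖ < ρ := by
  refine Filter.eventually_all.2 fun i => Filter.Eventually.filter_mono inf_le_left ?_
  have hc : ContinuousAt (fun r : ℝ => ‖r • x i‖) 0 := by fun_prop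
  exact hc.eventually_lt_const (by simpa using hρ)

/-- A finite family of homothets and finite families of translates of `Ka` and `Kb` whose incidences
are forcing. A homothet is encoded by its scaling factor and by the two vertices that decide which
translates of `Ka`, respectively of `Kb`, it meets; these vertices differ by the scaling factor
times `e`. -/
structure Config (Ka Kb : ConvexCone ℝ V) (e : V) (k l : ℕ) where
  ι : Type
  α : Type
  β : Type
  [fintypeι : Fintype ι]
  [fintypeα : Fintype α]
  [fintypeβ : Fintype β]
  scale : ι → ℝ
  fst : ι → V
  snd : ι → V
  apexA : α → V
  apexB : β → V
  scale_pos : ∀ i, 0 < scale i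
  snd_eq : ∀ i, snd i = fst i + scale i • e
  isForcing : IsForcing (fun i j => fst i - apexA j ∈ Ka) (fun i j => snd i - apexB j ∈ Kb) k l

namespace Config

attribute [instance] fintypeι fintypeα fintypeβ

/-- All scaling factors, vertices and apices of the configuration have norm less than `ρ`. -/
structure IsSmall {k l : ℕ} (C : Config Ka Kb e k l) (ρ : ℝ) : Prop where
  scale_lt : ∀ i, C.scale i < ρ
  norm_fst_lt : ∀ i, ‖C.fst i‖ < ρ
  norm_snd_lt : ∀ i, ‖C.snd i‖ < ρ
  norm_apexA_lt : ∀ j, ‖C.apexA j‖ < ρ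
  norm_apexB_lt : ∀ j, ‖C.apexB j‖ < ρ

/-- The image of a configuration under the homothety with center `0` and factor `r`. -/
def smul {k l : ℕ} (C : Config Ka Kb e k l) {r : ℝ} (hr : 0 < r) : Config Ka Kb e k l where
  ι := C.ι
  α := C.α
  β := C.β
  scale i := r * C.scale i
  fst i := r • C.fst i
  snd i := r • C.snd i
  apexA j := r • C.apexA j
  apexB j := r • C.apexB j
  scale_pos i := mul_pos hr (C.scale_pos i)
  snd_eq i := by rw [C.snd_eq, smul_add, mul_smul]
  isForcing := by simpa only [← smul_sub, ConvexCone.smul_mem_iff _ hr] using C.isForcing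

lemma exists_isSmall {k l : ℕ} (C : Config Ka Kb e k l) {ρ : ℝ} (hρ : 0 < ρ) :
    ∃ C' : Config Ka Kb e k l, C'.IsSmall ρ := by
  obtain ⟨r, hscale, hfst, hsnd, hA, hB, hr⟩ := ((eventually_norm_smul_lt C.scale hρ).and <|
    (eventually_norm_smul_lt C.fst hρ).and <| (eventually_norm_smul_lt C.snd hρ).and <|
    (eventually_norm_smul_lt C.apexA hρ).and <| (eventually_norm_smul_lt C.apexB hρ).and
    self_mem_nhdsWithin).exists
  exact ⟨C.smul hr, fun i => (le_abs_self _).trans_lt (hscale i), hfst, hsnd, hA, hB⟩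

/-- A configuration consisting of `C₁` near `0`, of `C₂` near `D`, and of one new homothet. If the
new homothet is red, a monochromatic cone is found in `C₁`, and otherwise one is found in `C₂`. -/
def glue {k l : ℕ} {ρ : ℝ} (hρ : 0 < ρ) (hε : 0 < ε)
    (near : ∀ x y w : V, ‖x‖ < ρ → ‖y‖ < ρ → ‖w‖ < ρ →
      IsGadget Ka Kb e (D + (x - y)) (z - w) ε)
    {C₁ : Config Ka Kb e k (l + 1)} (hC₁ : C₁.IsSmall ρ)
    {C₂ : Config Ka Kb e (k + 1) l} (hC₂ : C₂.IsSmall ρ) : Config Ka Kb e (k + 1) (l + 1) where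
  ι := (C₁.ι ⊕ C₂.ι) ⊕ Unit
  α := C₁.α ⊕ C₂.α
  β := C₁.β ⊕ C₂.β
  scale := Sum.elim (Sum.elim C₁.scale C₂.scale) fun _ => ε
  fst := Sum.elim (Sum.elim C₁.fst fun i => D + C₂.fst i) fun _ => z - ε • e
  snd := Sum.elim (Sum.elim C₁.snd fun i => D + C₂.snd i) fun _ => z
  apexA := Sum.elim C₁.apexA fun j => D + C₂.apexA j
  apexB := Sum.elim C₁.apexB fun j => D + C₂.apexB j
  scale_pos := by rintro ((_ | _) | _) <;> simp [scale_pos, hε]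
  snd_eq := by rintro ((_ | _) | _) <;> simp [snd_eq, add_assoc]
  isForcing := by
    have h0 : ‖(0 : V)‖ < ρ := by rwa [norm_zero]
    have cross : ∀ x y : V, ‖x‖ < ρ → ‖y‖ < ρ → IsGadget Ka Kb e (D + x - y) z ε :=
      fun x y hx hy => by simpa [add_sub_assoc] using near x y 0 hx hy h0
    have new₁ : ∀ w : V, ‖w‖ < ρ → IsGadget Ka Kb e D (z - w) ε :=
      fun w hw => by simpa using near 0 0 w h0 h0 hw
    have new₂ : ∀ x : V, ‖x‖ < ρ → IsGadget Ka Kb e (D + x) z ε :=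
      fun x hx => by simpa using near x 0 0 hx h0 h0
    refine IsForcing.glue C₁.isForcing ?_ (fun i j => ?_) (fun i j => ?_) (fun i j => ?_)
      (fun i j => ?_) (fun j => ?_) (fun j => ?_) (fun j => ?_) (fun j => ?_)
    · simpa only [Sum.elim_inl, Sum.elim_inr, add_sub_add_left_eq_sub] using C₂.isForcing
    all_goals simp only [Sum.elim_inl, Sum.elim_inr]
    · simpa using (cross _ _ (hC₂.norm_apexA_lt j) (hC₁.norm_fst_lt i)).neg_notMem_left
    · exact (cross _ _ (hC₂.norm_fst_lt i) (hC₁.norm_apexA_lt j)).notMem_left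
    · simpa using (cross _ _ (hC₂.norm_apexB_lt j) (hC₁.norm_snd_lt i)).neg_notMem_right
    · exact (cross _ _ (hC₂.norm_snd_lt i) (hC₁.norm_apexB_lt j)).notMem_right
    · rw [sub_right_comm]
      exact interior_subset (new₁ _ (hC₁.norm_apexA_lt j)).fst_mem
    · exact (new₂ _ (hC₂.norm_apexA_lt j)).fst_sub_notMem
    · exact (new₁ _ (hC₁.norm_apexB_lt j)).snd_notMem
    · exact interior_subset (new₂ _ (hC₂.norm_apexB_lt j)).snd_sub_mem

/-- Without homothets, the single translate of `Ka` at `0` meets only red ones. -/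
def zeroLeft (Ka Kb : ConvexCone ℝ V) (e : V) (l : ℕ) : Config Ka Kb e 0 l where
  ι := Empty
  α := Unit
  β := Empty
  scale := Empty.elim
  fst := Empty.elim
  snd := Empty.elim
  apexA := 0
  apexB := Empty.elim
  scale_pos := nofun
  snd_eq := nofun
  isForcing := isForcing_zero_left _ _ l

/-- Without homothets, the single translate of `Kb` at `0` meets only blue ones. -/
def zeroRight (Ka Kb : ConvexCone ℝ V) (e : V) (k : ℕ) : Config Ka Kb e k 0 where
  ι := Empty
  α := Empty
  β := Unit
  scale := Empty.elim
  fst := Empty.elim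
  snd := Empty.elim
  apexA := Empty.elim
  apexB := 0
  scale_pos := nofun
  snd_eq := nofun
  isForcing := isForcing_zero_right _ _ k

lemma nonempty (ha : IsTransverse Ka d (-e)) (hb : IsTransverse Kb d e) :
    ∀ k l : ℕ, Nonempty (Config Ka Kb e k l)
  | 0, l => ⟨zeroLeft Ka Kb e l⟩
  | k + 1, 0 => ⟨zeroRight Ka Kb e (k + 1)⟩
  | k + 1, l + 1 => by
    obtain ⟨D, z, ε, hε, hG⟩ := exists_isGadget ha hb
    obtain ⟨ρ, hρ, near⟩ := hG.exists_forall_near ha.isClosed hb.isClosed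
    obtain ⟨C₁⟩ := nonempty ha hb k (l + 1)
    obtain ⟨C₂⟩ := nonempty ha hb (k + 1) l
    obtain ⟨C₁', hC₁⟩ := C₁.exists_isSmall hρ
    obtain ⟨C₂', hC₂⟩ := C₂.exists_isSmall hρ
    exact ⟨glue hρ hε near hC₁ hC₂⟩

end Config

/-- The translate of `K` to the vertex `m` of `-S` contains `-S`. -/
structure IsSupportingCone (K : ConvexCone ℝ V) (S : Set V) (m : V) : Prop where
  neg_mem : -m ∈ S
  neg_sub_mem : ∀ x ∈ S, -x - m ∈ K

/-- Since `m + K` contains `-S`, the homothet `ε • S + p` lies in the translate of `-K` whose apex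
is its point `p - ε • m`. -/
lemma IsSupportingCone.inter_nonempty_iff (h : IsSupportingCone K S m) (hε : 0 < ε) (p q : V) :
    ((fun x => ε • x + p) '' S ∩ (fun x => x + q) '' (K : Set V)).Nonempty ↔
      p - ε • m - q ∈ K := by
  constructor
  · rintro ⟨_, ⟨x, hx, rfl⟩, y, hy, hxy : y + q = ε • x + p⟩
    have hsum := K.add_mem hy (K.smul_mem hε (h.neg_sub_mem x hx))
    rw [← sub_eq_iff_eq_add.2 hxy.symm] at hsum
    convert hsum using 1
    module
  · intro hmem
    refine ⟨p - ε • m, ⟨-m, h.neg_mem, ?_⟩, ⟨_, hmem, sub_add_cancel _ _⟩⟩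
    simp only [smul_neg, neg_add_eq_sub]

lemma norm_smul_le_mul {r ρ R : ℝ} (hr : 0 ≤ r) (hrρ : r ≤ ρ) {x : V} (hx : ‖x‖ ≤ R) :
    ‖r • x‖ ≤ ρ * R := by
  rw [norm_smul, Real.norm_of_nonneg hr]
  exact mul_le_mul hrρ hx (norm_nonneg x) (hr.trans hrρ)

lemma image_smul_add_subset_closedBall {r ρ ρ' R : ℝ} {p : V} (hS : ∀ x ∈ S, ‖x‖ ≤ R)
    (hr : 0 ≤ r) (hrρ : r ≤ ρ) (hp : ‖p‖ ≤ ρ') :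
    (fun x => r • x + p) '' S ⊆ Metric.closedBall 0 (ρ * R + ρ') := by
  rintro _ ⟨x, hx, rfl⟩
  exact mem_closedBall_zero_iff.2 (norm_add_le_of_le (norm_smul_le_mul hr hrρ (hS x hx)) hp)

end Cones

lemma exists_supporting_functional {V : Type*} [NormedAddCommGroup V] [NormedSpace ℝ V]
    {C : Set V} {m x o : V} (hC : Convex ℝ C) (hm : m ∈ C) (hx : x ∈ C) (ho : o ∈ C)
    (hmx : segment ℝ m x ⊆ frontier C) (hmo : ¬ segment ℝ m o ⊆ frontier C) :
    ∃ φ : StrongDual ℝ V, φ (x - m) = 0 ∧ (∀ z ∈ C, 0 ≤ φ (z - m)) ∧ 0 < φ (o - m) := by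
  obtain ⟨q, hq, hqfr⟩ := Set.not_subset.1 hmo
  have hqint : q ∈ interior C := by
    by_contra hqint
    exact hqfr ⟨subset_closure (hC.segment_subset hm ho hq), hqint⟩
  obtain ⟨φ, hφ⟩ := geometric_hahn_banach_point_open hC.interior isOpen_interior
    (hmx (midpoint_mem_segment m x)).2
  have hle : ∀ z ∈ C, φ (midpoint ℝ m x) ≤ φ z := fun z hz => by
    have hz' : z ∈ closure (interior C) := by
      rw [hC.closure_interior_eq_closure_of_nonempty_interior ⟨q, hqint⟩]
      exact subset_closure hz
    exact closure_minimal (fun w hw => (hφ w hw).le) (isClosed_le continuous_const φ.continuous) hz'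
  have hmid : φ (midpoint ℝ m x) = (φ m + φ x) / 2 := by
    rw [midpoint_eq_smul_add, map_smul, map_add, smul_eq_mul, invOf_eq_inv]
    ring
  have hφm : φ (midpoint ℝ m x) = φ m := by linarith [hle m hm, hle x hx]
  have hφx : φ x = φ m := by linarith
  rw [hφm] at hle hφ
  simp only [map_sub, sub_nonneg, sub_pos, sub_eq_zero]
  refine ⟨φ, hφx, hle, (hle o ho).lt_of_ne fun h => ?_⟩
  obtain ⟨s, t, -, -, hst, rfl⟩ := hq
  have := hφ _ hqint
  rw [map_add, map_smul, map_smul, ← h, ← add_smul, hst, one_smul] at this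
  exact lt_irrefl _ this

lemma linearIndependent_sub_of_mem_extremePoints {V : Type*} [AddCommGroup V] [Module ℝ V]
    {C : Set V} {m x y : V} (hm : m ∈ C.extremePoints ℝ) (hx : x ∈ C.extremePoints ℝ)
    (hy : y ∈ C.extremePoints ℝ) (hxm : x ≠ m) (hym : y ≠ m) (hxy : x ≠ y) :
    LinearIndependent ℝ ![x - m, y - m] := by
  rw [LinearIndependent.pair_iff' (sub_ne_zero.2 hxm)]
  intro c hc
  have hcol : Collinear ℝ {m, x, y} := by
    rw [collinear_iff_of_mem (Set.mem_insert m {x, y})]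
    refine ⟨x - m, ?_⟩
    rintro p (rfl | rfl | rfl)
    · exact ⟨0, by simp⟩
    · exact ⟨1, by simp⟩
    · exact ⟨c, by simp [hc]⟩
  rw [mem_extremePoints_iff_forall_segment] at hm hx hy
  rcases hcol.wbtw_or_wbtw_or_wbtw with h | h | h <;> rw [← mem_segment_iff_wbtw] at h
  · rcases hx.2 _ hm.1 _ hy.1 h with h | h
    exacts [hxm h.symm, hxy h.symm]
  · rcases hy.2 _ hx.1 _ hm.1 h with h | h
    exacts [hxy h, hym h.symm]
  · rcases hm.2 _ hy.1 _ hx.1 h with h | h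
    exacts [hym h, hxm h]

section Corners

variable {C : Set Plane} {m x y o w₁ w₂ : Plane}

/-- The set `wedge w₁ w₂` as a convex cone. -/
def wedgeCone (w₁ w₂ : Plane) : ConvexCone ℝ Plane where
  carrier := wedge w₁ w₂
  smul_mem' := by
    rintro c hc _ ⟨s, t, hs, ht, rfl⟩
    exact ⟨c * s, c * t, by positivity, by positivity, by module⟩
  add_mem' := by
    rintro _ ⟨s, t, hs, ht, rfl⟩ _ ⟨s', t', hs', ht', rfl⟩
    exact ⟨s + s', t + t', by positivity, by positivity, by module⟩

lemma exists_eq_smul_add_smul (h : LinearIndependent ℝ ![w₁, w₂]) (z : Plane) :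
    ∃ s t : ℝ, z = s • w₁ + t • w₂ := by
  have hspan := h.span_eq_top_of_card_eq_finrank' (by simp)
  rw [Matrix.range_cons, Matrix.range_cons, Matrix.range_empty, Set.union_empty,
    Set.singleton_union] at hspan
  obtain ⟨s, t, hst⟩ := Submodule.mem_span_pair.1 (hspan ▸ Submodule.mem_top (x := z))
  exact ⟨s, t, hst.symm⟩

lemma inner_pos_of_mem_wedge {u z : Plane} (h₁ : 0 < ⟪u, w₁⟫) (h₂ : 0 < ⟪u, w₂⟫)
    (hz : z ∈ wedge w₁ w₂) (hz0 : z ≠ 0) : 0 < ⟪u, z⟫ := by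
  obtain ⟨s, t, hs, ht, rfl⟩ := hz
  rw [inner_add_right, inner_smul_right, inner_smul_right]
  rcases hs.eq_or_lt with rfl | hs
  · rcases ht.eq_or_lt with rfl | ht
    · simp at hz0
    · positivity
  · positivity

/-- The point `m` is a vertex of the planar convex set `C`, and the segments from `m` to the points
`x` and `y` of `C` lie on the two sides of `C` at `m`. -/
structure IsPlanarCorner (C : Set Plane) (m x y : Plane) : Prop where
  convex : Convex ℝ C
  mem : m ∈ C
  mem_left : x ∈ C
  mem_right : y ∈ C
  segment_left : segment ℝ m x ⊆ frontier C
  segment_right : segment ℝ m y ⊆ frontier C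
  linearIndependent : LinearIndependent ℝ ![x - m, y - m]

namespace IsPlanarCorner

/-- The two functionals vanish on the two sides of `C` at `m`. -/
lemma exists_functionals (h : IsPlanarCorner C m x y) (ho : o ∈ C)
    (hmo : ¬ segment ℝ m o ⊆ frontier C) :
    ∃ φ ψ : StrongDual ℝ Plane, (∀ z, z ∈ wedge (x - m) (y - m) ↔ 0 ≤ φ z ∧ 0 ≤ ψ z) ∧
      (∀ z ∈ C, 0 ≤ φ (z - m) ∧ 0 ≤ ψ (z - m)) ∧ 0 < φ (o - m) ∧ 0 < ψ (o - m) := by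
  obtain ⟨φ, hφx, hφ, hφo⟩ :=
    exists_supporting_functional h.convex h.mem h.mem_left ho h.segment_left hmo
  obtain ⟨ψ, hψy, hψ, hψo⟩ :=
    exists_supporting_functional h.convex h.mem h.mem_right ho h.segment_right hmo
  have hφst : ∀ s t : ℝ, φ (s • (x - m) + t • (y - m)) = t * φ (y - m) := fun s t => by
    rw [map_add, map_smul, map_smul, hφx, smul_zero, zero_add, smul_eq_mul]
  have hψst : ∀ s t : ℝ, ψ (s • (x - m) + t • (y - m)) = s * ψ (x - m) := fun s t => by
    rw [map_add, map_smul, map_smul, hψy, smul_zero, add_zero, smul_eq_mul]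
  obtain ⟨s₀, t₀, hst₀⟩ := exists_eq_smul_add_smul h.linearIndependent (o - m)
  have hφy : 0 < φ (y - m) := (hφ y h.mem_right).lt_of_ne fun h0 => by
    rw [hst₀, hφst, ← h0, mul_zero] at hφo
    exact lt_irrefl _ hφo
  have hψx : 0 < ψ (x - m) := (hψ x h.mem_left).lt_of_ne fun h0 => by
    rw [hst₀, hψst, ← h0, mul_zero] at hψo
    exact lt_irrefl _ hψo
  refine ⟨φ, ψ, fun z => ⟨?_, fun ⟨hφz, hψz⟩ => ?_⟩, fun z hz => ⟨hφ z hz, hψ z hz⟩, hφo, hψo⟩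
  · rintro ⟨s, t, hs, ht, rfl⟩
    rw [hφst, hψst]
    exact ⟨by positivity, by positivity⟩
  · obtain ⟨s, t, rfl⟩ := exists_eq_smul_add_smul h.linearIndependent z
    rw [hφst] at hφz
    rw [hψst] at hψz
    exact ⟨s, t, nonneg_of_mul_nonneg_left hψz hψx, nonneg_of_mul_nonneg_left hφz hφy, rfl⟩

lemma isSupportingCone {S : Set Plane} (h : IsPlanarCorner (negSet S) m x y) (ho : o ∈ negSet S)
    (hmo : ¬ segment ℝ m o ⊆ frontier (negSet S)) :
    IsSupportingCone (wedgeCone (x - m) (y - m)) S m := by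
  obtain ⟨φ, ψ, hwedge, hC, -, -⟩ := h.exists_functionals ho hmo
  obtain ⟨s, hs, rfl⟩ := h.mem
  exact ⟨(neg_neg s).symm ▸ hs, fun z hz => (hwedge _).2 (hC _ ⟨z, hz, rfl⟩)⟩

lemma isTransverse (h : IsPlanarCorner C m x y) (ho : o ∈ C) (hmo : ¬ segment ℝ m o ⊆ frontier C)
    {d u : Plane} (hd : d ≠ 0) (hud : ⟪u, d⟫ = 0) (hu : ∀ z ∈ C, z ≠ m → ⟪u, m⟫ < ⟪u, z⟫) :
    IsTransverse (wedgeCone (x - m) (y - m)) d (o - m) := by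
  obtain ⟨φ, ψ, hwedge, -, hφo, hψo⟩ := h.exists_functionals ho hmo
  have hpos : ∀ z ∈ C, z - m ≠ 0 → 0 < ⟪u, z - m⟫ := fun z hz hzm => by
    rw [inner_sub_right, sub_pos]
    exact hu z hz (sub_ne_zero.1 hzm)
  have hnotMem : ∀ z : Plane, z ≠ 0 → ⟪u, z⟫ = 0 → z ∉ wedge (x - m) (y - m) := fun z hz h0 hzw =>
    (inner_pos_of_mem_wedge (hpos x h.mem_left (h.linearIndependent.ne_zero 0))
      (hpos y h.mem_right (h.linearIndependent.ne_zero 1)) hzw hz).ne' h0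
  have hset : wedge (x - m) (y - m) = {z | 0 ≤ φ z} ∩ {z | 0 ≤ ψ z} := Set.ext hwedge
  refine ⟨?_, ?_, hnotMem d hd hud, hnotMem (-d) (neg_ne_zero.2 hd) (by simp [hud])⟩
  · change IsClosed (wedge _ _)
    rw [hset]
    exact (isClosed_le continuous_const φ.continuous).inter
      (isClosed_le continuous_const ψ.continuous)
  · have hopen : IsOpen ({z | 0 < φ z} ∩ {z | 0 < ψ z}) :=
      (isOpen_lt continuous_const φ.continuous).inter (isOpen_lt continuous_const ψ.continuous)
    exact interior_maximal (fun z hz => (hwedge z).2 ⟨hz.1.le, hz.2.le⟩) hopen ⟨hφo, hψo⟩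

end IsPlanarCorner

lemma neg_mem_extremePoints_negSet {S : Set Plane} {p : Plane} (hp : p ∈ S.extremePoints ℝ) :
    -p ∈ (negSet S).extremePoints ℝ := by
  have := image_extremePoints (LinearEquiv.neg ℝ : Plane ≃ₗ[ℝ] Plane) S
  exact this ▸ Set.mem_image_of_mem _ hp

lemma convex_negSet {S : Set Plane} (hS : Convex ℝ S) : Convex ℝ (negSet S) :=
  hS.is_linear_image (IsLinearMap.isLinearMap_neg)

lemma fin_add_one_ne_self {n : ℕ} [NeZero n] (hn : 2 ≤ n) (i : Fin n) : i + 1 ≠ i := by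
  rw [ne_eq, add_eq_left, Fin.ext_iff, Fin.val_one', Fin.val_zero, Nat.mod_eq_of_lt hn]
  exact one_ne_zero

lemma fin_sub_one_ne_add_one {n : ℕ} [NeZero n] (hn : 3 ≤ n) (i : Fin n) : i - 1 ≠ i + 1 := by
  rw [ne_eq, sub_eq_iff_eq_add, add_assoc, left_eq_add, Fin.ext_iff, Fin.val_add, Fin.val_one',
    Nat.mod_eq_of_lt (show 1 < n by lia), Nat.mod_eq_of_lt hn]
  exact two_ne_zero

lemma isPlanarCorner_negSet_convexHull {P : Finset Plane} (hP : StrictlyConvexPosition P) {n : ℕ}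
    [NeZero n] (hn : 3 ≤ n) {v : Fin n → Plane} (hvinj : Function.Injective v)
    (hvP : ∀ i, -v i ∈ P)
    (hv : ∀ i, segment ℝ (v i) (v (i + 1)) ⊆ frontier (negSet (convexHull ℝ (P : Set Plane))))
    (i : Fin n) :
    IsPlanarCorner (negSet (convexHull ℝ (P : Set Plane))) (v i) (v (i - 1)) (v (i + 1)) := by
  have hext : ∀ j, v j ∈ (negSet (convexHull ℝ (P : Set Plane))).extremePoints ℝ := fun j =>
    neg_neg (v j) ▸ neg_mem_extremePoints_negSet (hP _ (hvP j))
  have hprev : i - 1 ≠ i := fun h => fin_add_one_ne_self (by lia) i (sub_eq_iff_eq_add.1 h).symm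
  exact {
    convex := convex_negSet (convex_convexHull ℝ _)
    mem := (hext i).1
    mem_left := (hext _).1
    mem_right := (hext _).1
    segment_left := by simpa only [sub_add_cancel, segment_symm ℝ (v i)] using hv (i - 1)
    segment_right := hv i
    linearIndependent := linearIndependent_sub_of_mem_extremePoints (hext i) (hext _) (hext _)
      (hvinj.ne hprev) (hvinj.ne (fin_add_one_ne_self (by lia) i))
      (hvinj.ne (fin_sub_one_ne_add_one hn i)) }

end Corners

theorem statement6_general {V : Type*} [NormedAddCommGroup V] [NormedSpace ℝ V]
    {Ka Kb : ConvexCone ℝ V} {S : Set V} {a b d : V} (hS : Bornology.IsBounded S)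
    (hKa : IsSupportingCone Ka S a) (hKb : IsSupportingCone Kb S b)
    (hda : IsTransverse Ka d (b - a)) (hdb : IsTransverse Kb d (a - b))
    (k l : ℕ) {δ : ℝ} (hδ : 0 < δ) :
    ∃ (ι₁ ι₂ ι₃ : Type) (_ : Fintype ι₁) (_ : Fintype ι₂) (_ : Fintype ι₃)
      (ε : ι₁ → ℝ) (p : ι₁ → V) (qa : ι₂ → V) (qb : ι₃ → V)
      (X : ι₁ → Set V) (A : ι₂ → Set V) (B : ι₃ → Set V) (center : V),
      (∀ i, 0 < ε i) ∧ (∀ i, X i = (fun x => ε i • x + p i) '' S) ∧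
      (∀ j, A j = (fun x => x + qa j) '' Ka) ∧ (∀ j, B j = (fun x => x + qb j) '' Kb) ∧
      (∀ i, X i ⊆ Metric.closedBall center δ) ∧
      (∀ j, qa j ∈ Metric.closedBall center δ) ∧ (∀ j, qb j ∈ Metric.closedBall center δ) ∧
      (∀ j, Nat.card {i : ι₁ | (X i ∩ A j).Nonempty} = k) ∧
      (∀ j, Nat.card {i : ι₁ | (X i ∩ B j).Nonempty} = l) ∧
      (∀ red : ι₁ → Bool,
        (∃ j, ∀ i, (X i ∩ A j).Nonempty → red i = true) ∨
        (∃ j, ∀ i, (X i ∩ B j).Nonempty → red i = false)) := by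
  obtain ⟨R, hR⟩ := hS.exists_norm_le
  have hR0 : 0 ≤ R := (norm_nonneg _).trans (hR _ hKa.neg_mem)
  obtain ⟨C₀⟩ := Config.nonempty (by rwa [neg_sub]) hdb k l
  obtain ⟨ρ, hρ, hρδ⟩ : ∃ ρ > 0, ρ * R + (ρ + ρ * R) = δ :=
    ⟨δ / (R + (1 + R)), by positivity, by field_simp⟩
  obtain ⟨C, hC⟩ := C₀.exists_isSmall hρ
  have hle : ρ ≤ δ := by nlinarith
  have hA : ∀ i j, ((fun x => C.scale i • x + (C.fst i + C.scale i • a)) '' S ∩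
      (fun x => x + C.apexA j) '' (Ka : Set V)).Nonempty ↔ C.fst i - C.apexA j ∈ Ka := fun i j => by
    rw [hKa.inter_nonempty_iff (C.scale_pos i), add_sub_cancel_right]
  have hB : ∀ i j, ((fun x => C.scale i • x + (C.fst i + C.scale i • a)) '' S ∩
      (fun x => x + C.apexB j) '' (Kb : Set V)).Nonempty ↔ C.snd i - C.apexB j ∈ Kb := fun i j => by
    rw [hKb.inter_nonempty_iff (C.scale_pos i), add_sub_assoc, ← smul_sub, ← C.snd_eq]
  obtain ⟨hk, hl, hcol⟩ := C.isForcing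
  refine ⟨C.ι, C.α, C.β, inferInstance, inferInstance, inferInstance, C.scale,
    fun i => C.fst i + C.scale i • a, C.apexA, C.apexB, _, _, _, 0, C.scale_pos, fun _ => rfl,
    fun _ => rfl, fun _ => rfl, fun i => ?_, fun j => ?_, fun j => ?_, ?_, ?_, ?_⟩
  · rw [← hρδ]
    refine image_smul_add_subset_closedBall hR (C.scale_pos i).le (hC.scale_lt i).le ?_
    exact norm_add_le_of_le (hC.norm_fst_lt i).le
      (norm_smul_le_mul (C.scale_pos i).le (hC.scale_lt i).le (norm_neg a ▸ hR _ hKa.neg_mem))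
  · exact mem_closedBall_zero_iff.2 ((hC.norm_apexA_lt j).le.trans hle)
  · exact mem_closedBall_zero_iff.2 ((hC.norm_apexB_lt j).le.trans hle)
  · simpa only [hA] using hk
  · simpa only [hB] using hl
  · simpa only [hA, hB] using hcol

theorem statement6 (P : Finset Plane) (hcard : 4 ≤ P.card)
    (hpos : StrictlyConvexPosition P)
    (S : Set Plane) (hS : S = convexHull ℝ (P : Set Plane))
    (hunit : S ⊆ Metric.closedBall (0 : Plane) 1) (h0 : (0 : Plane) ∈ S)
    -- the vertices of −S, listed in cyclic order around the boundary:
    (n : ℕ) [NeZero n] (hn : n = P.card) (v : Fin n → Plane)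
    (hvinj : Function.Injective v)
    (hvrange : Set.range v = {x : Plane | -x ∈ P})
    (hvconsec : ∀ i : Fin n, segment ℝ (v i) (v (i + 1)) ⊆ frontier (negSet S))
    -- two non-adjacent vertices v a and v b:
    (a b : Fin n) (hab : a ≠ b)
    (hnotadj : ¬ segment ℝ (v a) (v b) ⊆ frontier (negSet S))
    -- a direction d, not parallel to any side of S, such that the two
    -- supporting lines of −S parallel to d touch −S exactly at v a and v b
    -- (u is a normal vector of these supporting lines):
    (d : Plane) (hd : d ≠ 0)
    (hdside : ∀ i : Fin n, ∀ c : ℝ, v (i + 1) - v i ≠ c • d)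
    (u : Plane) (hu : u ≠ 0) (hud : ⟪u, d⟫ = 0)
    (hmax : ∀ x ∈ negSet S, x ≠ v a → ⟪u, x⟫ < ⟪u, v a⟫)
    (hmin : ∀ x ∈ negSet S, x ≠ v b → ⟪u, v b⟫ < ⟪u, x⟫)
    (k l : ℕ) (hk : 1 ≤ k) (hl : 1 ≤ l) (δ : ℝ) (hδ : 0 < δ) :
    ∃ (ι₁ ι₂ ι₃ : Type) (_ : Fintype ι₁) (_ : Fintype ι₂) (_ : Fintype ι₃)
      (ε : ι₁ → ℝ) (p : ι₁ → Plane) (qa : ι₂ → Plane) (qb : ι₃ → Plane)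
      (X : ι₁ → Set Plane) (A : ι₂ → Set Plane) (B : ι₃ → Set Plane)
      (center : Plane),
      -- X is a family of positive homothetic copies of S:
      (∀ i, 0 < ε i) ∧ (∀ i, X i = homCopy (ε i) (p i) S) ∧
      -- A and B are families of translates of the wedges E^a and E^b:
      (∀ j, A j = (fun x => x + qa j) '' wedge (v (a - 1) - v a) (v (a + 1) - v a)) ∧
      (∀ j, B j = (fun x => x + qb j) '' wedge (v (b - 1) - v b) (v (b + 1) - v b)) ∧
      -- all members of X and all apices of the wedges lie in one disc of radius δ:
      (∀ i, X i ⊆ Metric.closedBall center δ) ∧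
      (∀ j, qa j ∈ Metric.closedBall center δ) ∧
      (∀ j, qb j ∈ Metric.closedBall center δ) ∧
      -- (i) every member of A meets exactly k members of X, and every member
      -- of B meets exactly l members of X:
      (∀ j, Nat.card {i : ι₁ | (X i ∩ A j).Nonempty} = k) ∧
      (∀ j, Nat.card {i : ι₁ | (X i ∩ B j).Nonempty} = l) ∧
      -- (ii) for every red/blue 2-coloring of X, some member of A meets only
      -- red members of X, or some member of B meets only blue members of X:
      (∀ red : ι₁ → Bool,
        (∃ j, ∀ i, (X i ∩ A j).Nonempty → red i = true) ∨
        (∃ j, ∀ i, (X i ∩ B j).Nonempty → red i = false)) := by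
  subst hS hn
  have hvP : ∀ i, -v i ∈ P := fun i => hvrange.subset ⟨i, rfl⟩
  have hcorner := isPlanarCorner_negSet_convexHull hpos (by lia) hvinj hvP hvconsec
  have ha := hcorner a
  have hb := hcorner b
  have hba : ¬ segment ℝ (v b) (v a) ⊆ frontier (negSet _) := segment_symm ℝ (v a) (v b) ▸ hnotadj
  exact statement6_general (Metric.isBounded_closedBall.subset hunit)
    (ha.isSupportingCone hb.mem hnotadj) (hb.isSupportingCone ha.mem hba)
    (ha.isTransverse hb.mem hnotadj (u := -u) hd (by rw [inner_neg_left, hud, neg_zero])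
      (by simpa only [inner_neg_left, neg_lt_neg_iff] using hmax))
    (hb.isTransverse ha.mem hba hd hud hmin) k l hδ
end
end

section
/- Let S be a convex polygon with at least four sides, with 0 ∈ S. Then for every integer m ≥ 1 and every ε > 0 there exist a finite indexed family X' = (ε_i·S + p_i)_{i∈I} of positive homothetic copies of S with scaling factors 1 < ε_i < 1 + ε, and a finite set Y' of points of ℝ², such that every point of Y' belongs to exactly m members of X', and for every 2-coloring of the members of X' by red and blue there is a point y ∈ Y' such that all m members of X' containing y have the same color. In particular, X' is an m-fold covering of the set Y' that cannot be split into two subfamilies each covering Y'. -/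
/-!
STATEMENT 8: Let S be a convex polygon with at least four sides, with 0 ∈ S.
Then for every m ≥ 1 and ε > 0 there are a finite family X' of positive
homothetic copies of S with scaling factors strictly between 1 and 1 + ε, and
a finite set Y' of points, such that every point of Y' lies in exactly m
members of X', and for every red/blue coloring of X' there is a point of Y'
such that all m members of X' containing it get the same color. In
particular, X' is an m-fold covering of Y' that cannot be split into two
subfamilies each covering Y'.
-/

noncomputable section

/-!
Let `ac` be a diagonal of the polygon. Near each of the two vertices the polygon is a wedge, which
in suitable coordinates is a quadrant. Perturb `ρ • S` by a dilation and a translation of order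
`δ`. Magnified by `δ⁻¹` around `ρ • a` and around `ρ • c`, the copies become translated quadrants,
and the membership of a point near `ρ • a` or `ρ • c` turns into a coordinatewise comparison with
the apex of such a quadrant. The two apexes of a copy form a point of `ℝ² × ℝ²`. Translations and
dilations have three degrees of freedom and realize exactly a hyperplane there, namely `u₁ + w₁ =
u₂ + w₂` if the side vectors at each vertex are scaled to add up to the diagonal.

It remains to find finitely many points of the hyperplane such that certain quadrants contain `k`
points each with respect to the first pair of coordinates, or `l` points each with respect to the
second pair, and every coloring makes some of the former quadrants entirely `true` or some of the
latter ones entirely `false`. The induction step from `(k, l + 1)` and `(k + 1, l)` to `(k + 1, l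
+ 1)` puts the two configurations far apart and adds one point `z` to all quadrants of the first
kind in the first configuration and to all quadrants of the second kind in the second one. If `z`
is `true`, the first configuration has the required quadrant, otherwise the second one does.
-/

section Configurations

open Finset

/-- The hyperplane of the displacements `((u₁, u₂), (w₁, w₂))` of the four sides meeting at the
endpoints of a diagonal: `u₁, u₂` belong to one endpoint and `w₁, w₂` to the other one. -/
def sideHyperplane : Submodule ℝ ((ℝ × ℝ) × (ℝ × ℝ)) where
  carrier := {x | x.1.1 + x.2.1 = x.1.2 + x.2.2}
  add_mem' {x y} hx hy := by
    simp only [Set.mem_ofPred_eq, Prod.fst_add, Prod.snd_add] at *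
    linarith
  zero_mem' := rfl
  smul_mem' c x hx := by
    simp only [Set.mem_ofPred_eq, Prod.smul_fst, Prod.smul_snd, smul_eq_mul] at *
    rw [← mul_add, hx, mul_add]

lemma mem_sideHyperplane {x : (ℝ × ℝ) × (ℝ × ℝ)} :
    x ∈ sideHyperplane ↔ x.1.1 + x.2.1 = x.1.2 + x.2.2 := Iff.rfl

/-- A finite set `U` of points `x` of the hyperplane, together with corners `r ∈ R` and `r ∈ B` of
quadrants. The quadrants `{x | r ≤ x.1}` with `r ∈ R` contain `k` points of `U` each, the quadrants
`{x | r ≤ x.2}` with `r ∈ B` contain `l` points each, and no coloring makes all of the former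
contain the color `false` and all of the latter the color `true`. -/
structure IsUnsplittableConfig (k l : ℕ) (U : Finset ((ℝ × ℝ) × (ℝ × ℝ)))
    (R B : Finset (ℝ × ℝ)) : Prop where
  mem_sideHyperplane : ∀ x ∈ U, x ∈ sideHyperplane
  card_fst : ∀ r ∈ R, #{x ∈ U | r ≤ x.1} = k
  card_snd : ∀ r ∈ B, #{x ∈ U | r ≤ x.2} = l
  exists_monochromatic : ∀ coloring : (ℝ × ℝ) × (ℝ × ℝ) → Bool,
    (∃ r ∈ R, ∀ x ∈ U, r ≤ x.1 → coloring x = true) ∨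
      ∃ r ∈ B, ∀ x ∈ U, r ≤ x.2 → coloring x = false

lemma isUnsplittableConfig_zero_left (l : ℕ) : IsUnsplittableConfig 0 l ∅ {0} ∅ where
  mem_sideHyperplane := by simp
  card_fst := by simp
  card_snd := by simp
  exists_monochromatic := by simp

lemma isUnsplittableConfig_zero_right (k : ℕ) : IsUnsplittableConfig k 0 ∅ ∅ {0} where
  mem_sideHyperplane := by simp
  card_fst := by simp
  card_snd := by simp
  exists_monochromatic := by simp

lemma IsUnsplittableConfig.translate {k l : ℕ} {U : Finset ((ℝ × ℝ) × (ℝ × ℝ))}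
    {R B : Finset (ℝ × ℝ)} (h : IsUnsplittableConfig k l U R B) {t : (ℝ × ℝ) × (ℝ × ℝ)}
    (ht : t ∈ sideHyperplane) :
    IsUnsplittableConfig k l (U.map (addRightEmbedding t)) (R.map (addRightEmbedding t.1))
      (B.map (addRightEmbedding t.2)) where
  mem_sideHyperplane := forall_mem_map.2 fun x hx => add_mem (h.mem_sideHyperplane x hx) ht
  card_fst := forall_mem_map.2 fun r hr => by
    simpa [filter_map, Function.comp_def] using h.card_fst r hr
  card_snd := forall_mem_map.2 fun r hr => by
    simpa [filter_map, Function.comp_def] using h.card_snd r hr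
  exists_monochromatic coloring := by
    simpa only [mem_map, exists_exists_and_eq_and, forall_exists_index, and_imp,
      forall_apply_eq_imp_iff₂, addRightEmbedding_apply, Prod.fst_add, Prod.snd_add,
      add_le_add_iff_right] using h.exists_monochromatic fun x => coloring (x + t)

lemma card_filter_insert_union_left {α : Type*} [DecidableEq α] {z : α} {U V : Finset α}
    {p : α → Prop} [DecidablePred p] (hz : p z) (hzU : z ∉ U) (hV : ∀ x ∈ V, ¬ p x) :
    #{x ∈ insert z (U ∪ V) | p x} = #{x ∈ U | p x} + 1 := by
  rw [filter_insert, if_pos hz, filter_union, filter_false_of_mem hV, union_empty,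
    card_insert_of_notMem fun h => hzU (mem_of_mem_filter z h)]

lemma card_filter_insert_union_right {α : Type*} [DecidableEq α] {z : α} {U V : Finset α}
    {p : α → Prop} [DecidablePred p] (hU : ∀ x ∈ insert z U, ¬ p x) :
    #{x ∈ insert z (U ∪ V) | p x} = #{x ∈ V | p x} := by
  rw [← insert_union, filter_union, filter_false_of_mem hU, empty_union]

/-- The new point `z` lies in the quadrants `{x | r ≤ x.1}` of the first configuration and in the
quadrants `{x | r ≤ x.2}` of the second one, and there are no other new incidences. -/
structure IsSeparatedBy (z : (ℝ × ℝ) × (ℝ × ℝ)) (U : Finset ((ℝ × ℝ) × (ℝ × ℝ)))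
    (R B : Finset (ℝ × ℝ)) (U' : Finset ((ℝ × ℝ) × (ℝ × ℝ))) (R' B' : Finset (ℝ × ℝ)) :
    Prop where
  notMem : z ∉ U
  notMem' : z ∉ U'
  le_fst : ∀ r ∈ R, r ≤ z.1
  le_snd' : ∀ r ∈ B', r ≤ z.2
  not_le_fst : ∀ r ∈ R, ∀ x ∈ U', ¬ r ≤ x.1
  not_le_snd : ∀ r ∈ B, ∀ x ∈ insert z U', ¬ r ≤ x.2
  not_le_fst' : ∀ r ∈ R', ∀ x ∈ insert z U, ¬ r ≤ x.1
  not_le_snd' : ∀ r ∈ B', ∀ x ∈ U, ¬ r ≤ x.2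

section Step

variable {k l : ℕ} {U U' : Finset ((ℝ × ℝ) × (ℝ × ℝ))} {R B R' B' : Finset (ℝ × ℝ)}
  {z : (ℝ × ℝ) × (ℝ × ℝ)}

lemma IsSeparatedBy.exists_monochromatic (hz : IsSeparatedBy z U R B U' R' B')
    (h : IsUnsplittableConfig k (l + 1) U R B) (h' : IsUnsplittableConfig (k + 1) l U' R' B')
    (coloring : (ℝ × ℝ) × (ℝ × ℝ) → Bool) :
    (∃ r ∈ R ∪ R', ∀ x ∈ insert z (U ∪ U'), r ≤ x.1 → coloring x = true) ∨
      ∃ r ∈ B ∪ B', ∀ x ∈ insert z (U ∪ U'), r ≤ x.2 → coloring x = false := by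
  simp only [forall_mem_insert, forall_mem_union]
  cases hcol : coloring z with
  | true =>
    refine (h.exists_monochromatic coloring).imp ?_ ?_
    · rintro ⟨r, hr, hmono⟩
      exact ⟨r, mem_union_left _ hr, fun _ => rfl, hmono,
        fun x hx hle => absurd hle (hz.not_le_fst r hr x hx)⟩
    · rintro ⟨r, hr, hmono⟩
      exact ⟨r, mem_union_left _ hr,
        fun hle => absurd hle (hz.not_le_snd r hr z (mem_insert_self z U')), hmono,
        fun x hx hle => absurd hle (hz.not_le_snd r hr x (mem_insert_of_mem hx))⟩
  | false =>
    refine (h'.exists_monochromatic coloring).imp ?_ ?_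
    · rintro ⟨r, hr, hmono⟩
      exact ⟨r, mem_union_right _ hr,
        fun hle => absurd hle (hz.not_le_fst' r hr z (mem_insert_self z U)),
        fun x hx hle => absurd hle (hz.not_le_fst' r hr x (mem_insert_of_mem hx)), hmono⟩
    · rintro ⟨r, hr, hmono⟩
      exact ⟨r, mem_union_right _ hr, fun _ => rfl,
        fun x hx hle => absurd hle (hz.not_le_snd' r hr x hx), hmono⟩

lemma IsUnsplittableConfig.insert_union (h : IsUnsplittableConfig k (l + 1) U R B)
    (h' : IsUnsplittableConfig (k + 1) l U' R' B') (hz : IsSeparatedBy z U R B U' R' B')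
    (hzH : z ∈ sideHyperplane) :
    IsUnsplittableConfig (k + 1) (l + 1) (insert z (U ∪ U')) (R ∪ R') (B ∪ B') where
  mem_sideHyperplane :=
    forall_mem_insert _ _ _ |>.2
      ⟨hzH, forall_mem_union.2 ⟨h.mem_sideHyperplane, h'.mem_sideHyperplane⟩⟩
  card_fst := forall_mem_union.2
    ⟨fun r hr => by
      rw [card_filter_insert_union_left (p := (r ≤ ·.1)) (hz.le_fst r hr) hz.notMem
        (hz.not_le_fst r hr), h.card_fst r hr],
    fun r hr => (card_filter_insert_union_right (hz.not_le_fst' r hr)).trans (h'.card_fst r hr)⟩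
  card_snd := forall_mem_union.2
    ⟨fun r hr => by
      rw [union_comm]
      exact (card_filter_insert_union_right (hz.not_le_snd r hr)).trans (h.card_snd r hr),
    fun r hr => by
      rw [union_comm, card_filter_insert_union_left (p := (r ≤ ·.2)) (hz.le_snd' r hr) hz.notMem'
        (hz.not_le_snd' r hr), h'.card_snd r hr]⟩
  exists_monochromatic := hz.exists_monochromatic h h'

end Step

lemma exists_forall_abs_le (V : Finset (ℝ × ℝ)) : ∃ N > 0, ∀ v ∈ V, |v.1| ≤ N ∧ |v.2| ≤ N := by
  simpa only [Prod.norm_def, Real.norm_eq_abs, sup_le_iff, mem_coe] using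
    V.finite_toSet.isBounded.exists_pos_norm_le

/-- With the second configuration moved by `K • ((5, -1), (-5, 1))`, the new point is
`K • ((4, 1), (-1, 2))`, where `K` is large compared with all coordinates. -/
lemma exists_isSeparatedBy_translate (U : Finset ((ℝ × ℝ) × (ℝ × ℝ))) (R B : Finset (ℝ × ℝ))
    (U' : Finset ((ℝ × ℝ) × (ℝ × ℝ))) (R' B' : Finset (ℝ × ℝ)) :
    ∃ z ∈ sideHyperplane, ∃ t ∈ sideHyperplane, IsSeparatedBy z U R B
      (U'.map (addRightEmbedding t)) (R'.map (addRightEmbedding t.1))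
      (B'.map (addRightEmbedding t.2)) := by
  obtain ⟨N, hN, hle⟩ := exists_forall_abs_le
    ((U ∪ U').image Prod.fst ∪ (U ∪ U').image Prod.snd ∪ (R ∪ R' ∪ (B ∪ B')))
  simp only [forall_mem_union, forall_mem_image, abs_le] at hle
  obtain ⟨⟨⟨hU₁, hU'₁⟩, hU₂, hU'₂⟩, ⟨hR, hR'⟩, hB, hB'⟩ := hle
  refine ⟨((4 * (3 * N), 3 * N), (-(3 * N), 2 * (3 * N))), ?_,
    ((5 * (3 * N), -(3 * N)), (-(5 * (3 * N)), 3 * N)), ?_, ?_⟩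
  · rw [mem_sideHyperplane]; ring
  · rw [mem_sideHyperplane]; ring
  · constructor
    case notMem => exact fun hz => by linarith [(hU₁ _ hz).1.2]
    case notMem' =>
      intro hz
      obtain ⟨x, hx, hxz⟩ := mem_map.1 hz
      have hxz₁ : x.1.1 + 5 * (3 * N) = 4 * (3 * N) := congrArg (·.1.1) hxz
      linarith [(hU'₁ x hx).1.1]
    all_goals simp only [forall_mem_insert, forall_mem_map, addRightEmbedding_apply,
      Prod.le_def, Prod.fst_add, Prod.snd_add, not_and_or, not_le]
    case le_fst => exact fun r hr => by constructor <;> linarith [hR r hr]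
    case le_snd' => exact fun r hr => by constructor <;> linarith [hB' r hr]
    case not_le_fst => exact fun r hr x hx => Or.inr (by linarith [hR r hr, hU'₁ x hx])
    case not_le_snd =>
      exact fun r hr =>
        ⟨Or.inl (by linarith [hB r hr]), fun x hx => Or.inl (by linarith [hB r hr, hU'₂ x hx])⟩
    case not_le_fst' =>
      exact fun r hr =>
        ⟨Or.inl (by linarith [hR' r hr]), fun x hx => Or.inl (by linarith [hR' r hr, hU₁ x hx])⟩
    case not_le_snd' => exact fun r hr x hx => Or.inr (by linarith [hB' r hr, hU₂ x hx])

theorem exists_isUnsplittableConfig (k l : ℕ) : ∃ U R B, IsUnsplittableConfig k l U R B := by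
  induction k generalizing l with
  | zero => exact ⟨_, _, _, isUnsplittableConfig_zero_left l⟩
  | succ k ihk =>
    induction l with
    | zero => exact ⟨_, _, _, isUnsplittableConfig_zero_right (k + 1)⟩
    | succ l ihl =>
      obtain ⟨U, R, B, h⟩ := ihk (l + 1)
      obtain ⟨U', R', B', h'⟩ := ihl
      obtain ⟨z, hz, t, ht, hsep⟩ := exists_isSeparatedBy_translate U R B U' R' B'
      exact ⟨_, _, _, h.insert_union (h'.translate ht) hsep hz⟩

end Configurations

section Covers

variable {α I : Type*} {m : ℕ} {X : I → Set α} {Y : Set α}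

/-- An indexed family `X` covering every point of `Y` exactly `m` times, such that every coloring
of the family with two colors leaves some point of `Y` in sets of one color only. -/
structure IsUnsplittableCover (m : ℕ) (X : I → Set α) (Y : Set α) : Prop where
  card_eq : ∀ y ∈ Y, Nat.card {i : I | y ∈ X i} = m
  exists_monochromatic : ∀ coloring : I → Bool, ∃ y ∈ Y, ∀ i i',
    y ∈ X i → y ∈ X i' → coloring i = coloring i'

lemma IsUnsplittableCover.exists_finset [Finite I] (h : IsUnsplittableCover m X Y) :
    ∀ y ∈ Y, ∃ t : Finset I, m ≤ t.card ∧ ∀ i ∈ t, y ∈ X i := fun y hy => by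
  have hfin := Set.toFinite {i : I | y ∈ X i}
  refine ⟨hfin.toFinset, ?_, fun i hi => hfin.mem_toFinset.1 hi⟩
  rw [← h.card_eq y hy, Nat.card_coe_set_eq, Set.ncard_eq_toFinset_card _ hfin]

lemma IsUnsplittableCover.not_split (h : IsUnsplittableCover m X Y) :
    ¬ ∃ I₁ : Set I, (∀ y ∈ Y, ∃ i ∈ I₁, y ∈ X i) ∧ ∀ y ∈ Y, ∃ i ∈ I₁ᶜ, y ∈ X i := by
  classical
  rintro ⟨I₁, h₁, h₂⟩
  obtain ⟨y, hy, hmono⟩ := h.exists_monochromatic fun i => decide (i ∈ I₁)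
  obtain ⟨i, hi, hyi⟩ := h₁ y hy
  obtain ⟨j, hj, hyj⟩ := h₂ y hy
  exact hj ((decide_eq_decide.1 (hmono i j hyi hyj)).1 hi)

lemma IsUnsplittableConfig.isUnsplittableCover {U : Finset ((ℝ × ℝ) × (ℝ × ℝ))}
    {R B : Finset (ℝ × ℝ)} (h : IsUnsplittableConfig m m U R B) {X : U → Set α} {f g : ℝ × ℝ → α}
    (hf : ∀ r ∈ R, ∀ x : U, f r ∈ X x ↔ r ≤ x.1.1) (hg : ∀ r ∈ B, ∀ x : U, g r ∈ X x ↔ r ≤ x.1.2) :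
    IsUnsplittableCover m X (f '' R ∪ g '' B) := by
  classical
  have hcard (p : (ℝ × ℝ) × (ℝ × ℝ) → Prop) : Nat.card {x : U | p x} = (U.filter p).card := by
    rw [Nat.card_coe_set_eq, ← Set.ncard_image_of_injective _ Subtype.val_injective,
      ← Set.ncard_coe_finset]
    congr 1
    ext x
    simp only [Set.mem_image, Set.mem_ofPred_eq, Subtype.exists, exists_and_left, exists_prop,
      exists_eq_right_right, Finset.coe_filter]
    exact and_comm
  constructor
  · rintro _ (⟨r, hr, rfl⟩ | ⟨r, hr, rfl⟩)
    · simp only [hf r hr, hcard (r ≤ ·.1)]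
      convert h.card_fst r hr
    · simp only [hg r hr, hcard (r ≤ ·.2)]
      convert h.card_snd r hr
  · intro coloring
    have hmono {y : α} {b : Bool} (hy : ∀ x, y ∈ X x → coloring x = b) :
        ∀ x x', y ∈ X x → y ∈ X x' → coloring x = coloring x' :=
      fun x x' hx hx' => (hy x hx).trans (hy x' hx').symm
    obtain ⟨r, hr, hcol⟩ | ⟨r, hr, hcol⟩ :=
      h.exists_monochromatic fun x => if hx : x ∈ U then coloring ⟨x, hx⟩ else true
    · refine ⟨f r, Or.inl ⟨r, hr, rfl⟩, hmono (b := true) fun x hx => ?_⟩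
      simpa using hcol x x.2 ((hf r hr x).1 hx)
    · refine ⟨g r, Or.inr ⟨r, hr, rfl⟩, hmono (b := false) fun x hx => ?_⟩
      simpa using hcol x x.2 ((hg r hr x).1 hx)

end Covers

section Wedges

open Filter Topology

lemma mem_homCopy {c : ℝ} (hc : c ≠ 0) {p y : Plane} {S : Set Plane} :
    y ∈ homCopy c p S ↔ c⁻¹ • (y - p) ∈ S := by
  constructor
  · rintro ⟨x, hx, rfl⟩
    rwa [add_sub_cancel_right, inv_smul_smul₀ hc]
  · exact fun h => ⟨_, h, by simp only [smul_inv_smul₀ hc, sub_add_cancel]⟩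

/-- Near `a`, the set `S` is the wedge on which the coordinates `A` are at least those of `a`. -/
def IsWedgeAt (S : Set Plane) (a : Plane) (A : Plane →ₗ[ℝ] ℝ × ℝ) : Prop :=
  ∀ᶠ y in 𝓝 a, (y ∈ S ↔ A a ≤ A y)

/-- Under the magnification by `δ⁻¹` centered at `ρ • a`, the copy with ratio `ρ + δ * s` and
translation vector `δ • t` tends to the wedge with apex `t + s • a`. -/
lemma IsWedgeAt.eventually_mem_homCopy {S : Set Plane} {a : Plane} {A : Plane →ₗ[ℝ] ℝ × ℝ}
    (h : IsWedgeAt S a A) {ρ : ℝ} (hρ : 0 < ρ) (s : ℝ) (t z : Plane) :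
    ∀ᶠ δ in 𝓝[>] (0 : ℝ),
      (ρ • a + δ • z ∈ homCopy (ρ + δ * s) (δ • t) S ↔ A (t + s • a) ≤ A z) := by
  have hratio : Tendsto (fun δ : ℝ => ρ + δ * s) (𝓝[>] 0) (𝓝 ρ) := by
    refine (Continuous.tendsto' ?_ 0 ρ ?_).mono_left nhdsWithin_le_nhds
    · fun_prop
    · simp
  have hpreimage : Tendsto (fun δ : ℝ => a + ((ρ + δ * s)⁻¹ * δ) • (z - (t + s • a)))
      (𝓝[>] 0) (𝓝 a) := by
    have hδ : Tendsto (fun δ : ℝ => δ) (𝓝[>] 0) (𝓝 0) := nhdsWithin_le_nhds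
    simpa using tendsto_const_nhds.add
      (((hratio.inv₀ hρ.ne').mul hδ).smul_const (z - (t + s • a)))
  filter_upwards [hpreimage.eventually h, hratio.eventually_const_lt hρ, self_mem_nhdsWithin]
    with δ hmem hc hδ
  have hk : 0 < (ρ + δ * s)⁻¹ * δ := mul_pos (inv_pos.2 hc) hδ
  have hpt : (ρ + δ * s)⁻¹ • (ρ • a + δ • z - δ • t) =
      a + ((ρ + δ * s)⁻¹ * δ) • (z - (t + s • a)) := by
    rw [mul_smul, inv_smul_eq_iff₀ hc.ne', smul_add, smul_inv_smul₀ hc.ne']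
    module
  rw [mem_homCopy hc.ne', hpt, hmem, map_add, le_add_iff_nonneg_right, map_smul,
    smul_nonneg_iff_nonneg_of_pos_left hk, map_sub, sub_nonneg]

/-- The coordinates `A` and `C` at two points `a` and `c` of a set realize all displacements in
`sideHyperplane` by translations by `t` and dilations by `s`. -/
def IsLinkedPair (a c : Plane) (A C : Plane →ₗ[ℝ] ℝ × ℝ) : Prop :=
  ∀ x ∈ sideHyperplane, ∃ (t : Plane) (s : ℝ), A (t + s • a) = x.1 ∧ C (t + s • c) = x.2

section Linked

variable {a c : Plane} {A C : Plane →ₗ[ℝ] ℝ × ℝ}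

lemma IsLinkedPair.surjective_left (h : IsLinkedPair a c A C) : Function.Surjective A := fun r =>
  have ⟨_, _, ht, _⟩ := h (r, r.swap) (add_comm r.1 r.2)
  ⟨_, ht⟩

lemma IsLinkedPair.surjective_right (h : IsLinkedPair a c A C) : Function.Surjective C := fun r =>
  have ⟨_, _, _, ht⟩ := h (r.swap, r) (add_comm r.2 r.1)
  ⟨_, ht⟩

theorem IsLinkedPair.exists_isUnsplittableCover (h : IsLinkedPair a c A C) {S : Set Plane}
    (hA : IsWedgeAt S a A) (hC : IsWedgeAt S c C) (m : ℕ) {α β : ℝ} (hα : 0 ≤ α) (hαβ : α < β) :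
    ∃ (I : Type) (_ : Fintype I) (c : I → ℝ) (p : I → Plane) (Y : Finset Plane),
      (∀ i, c i ∈ Set.Ioo α β) ∧ IsUnsplittableCover m (fun i => homCopy (c i) (p i) S) Y := by
  classical
  obtain ⟨U, R, B, hU⟩ := exists_isUnsplittableConfig m m
  obtain ⟨ρ, hαρ, hρβ⟩ := exists_between hαβ
  have hρ : 0 < ρ := hα.trans_lt hαρ
  choose t s hta htc using fun x : U => h (-x) (neg_mem (hU.mem_sideHyperplane x x.2))
  choose f hf using fun r : ℝ × ℝ => h.surjective_left (-r)
  choose g hg using fun r : ℝ × ℝ => h.surjective_right (-r)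
  have hratio (x : U) : ∀ᶠ δ in 𝓝[>] (0 : ℝ), ρ + δ * s x ∈ Set.Ioo α β :=
    ((Continuous.tendsto' (by fun_prop) 0 ρ (by simp)).mono_left nhdsWithin_le_nhds).eventually
      (Ioo_mem_nhds hαρ hρβ)
  have ha (r : ℝ × ℝ) (x : U) : ∀ᶠ δ in 𝓝[>] (0 : ℝ),
      (ρ • a + δ • f r ∈ homCopy (ρ + δ * s x) (δ • t x) S ↔ r ≤ x.1.1) := by
    simpa [hta, hf] using hA.eventually_mem_homCopy hρ (s x) (t x) (f r)
  have hc (r : ℝ × ℝ) (x : U) : ∀ᶠ δ in 𝓝[>] (0 : ℝ),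
      (ρ • c + δ • g r ∈ homCopy (ρ + δ * s x) (δ • t x) S ↔ r ≤ x.1.2) := by
    simpa [htc, hg] using hC.eventually_mem_homCopy hρ (s x) (t x) (g r)
  obtain ⟨δ, hδ, hδa, hδc⟩ := ((eventually_all.2 hratio).and
    (((Filter.eventually_all_finset R).2 fun r _ => eventually_all.2 (ha r)).and
      ((Filter.eventually_all_finset B).2 fun r _ => eventually_all.2 (hc r)))).exists
  refine ⟨U, inferInstance, fun x => ρ + δ * s x, fun x => δ • t x,
    R.image (fun r => ρ • a + δ • f r) ∪ B.image (fun r => ρ • c + δ • g r), hδ, ?_⟩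
  simpa only [Finset.coe_union, Finset.coe_image] using hU.isUnsplittableCover hδa hδc

end Linked

end Wedges

section ExtremePoints

variable {E : Type*} [AddCommGroup E] [Module ℝ E]

lemma not_collinear_of_mem_extremePoints {S : Set E} {a b c : E} (ha : a ∈ S.extremePoints ℝ)
    (hb : b ∈ S.extremePoints ℝ) (hc : c ∈ S.extremePoints ℝ) (hab : a ≠ b) (hac : a ≠ c)
    (hbc : b ≠ c) : ¬ Collinear ℝ {a, b, c} := by
  have hnot {x y z : E} (hx : x ∈ S.extremePoints ℝ) (hy : y ∈ S.extremePoints ℝ)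
      (hz : z ∈ S.extremePoints ℝ) (hxy : x ≠ y) (hzy : z ≠ y) : ¬ Wbtw ℝ x y z := fun h =>
    ((mem_extremePoints_iff_forall_segment.1 hy).2 x hx.1 z hz.1 (mem_segment_iff_wbtw.2 h)).elim
      hxy hzy
  intro h
  obtain h | h | h := Collinear.wbtw_or_wbtw_or_wbtw h
  · exact hnot ha hb hc hab hbc.symm h
  · exact hnot hb hc ha hbc hac h
  · exact hnot hc ha hb hac.symm hab.symm h

lemma exists_forall_lt_of_mem_extremePoints_convexHull [TopologicalSpace E]
    [IsTopologicalAddGroup E] [ContinuousSMul ℝ E] [LocallyConvexSpace ℝ E] [T2Space E]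
    {P : Set E} (hP : P.Finite) {a : E} (ha : a ∈ (convexHull ℝ P).extremePoints ℝ) :
    ∃ f : E →L[ℝ] ℝ, ∀ r ∈ P, r ≠ a → f a < f r := by
  have hnot : a ∉ convexHull ℝ (P \ {a}) := fun h =>
    ((convex_convexHull ℝ P).mem_extremePoints_iff_mem_sdiff_convexHull_sdiff (𝕜 := ℝ) |>.1 ha).2
      (convexHull_mono (Set.sdiff_subset_sdiff_left (subset_convexHull ℝ P)) h)
  obtain ⟨f, u, hfa, hfu⟩ := geometric_hahn_banach_point_closed (convex_convexHull ℝ _)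
    (hP.sdiff.isClosed_convexHull ℝ) hnot
  exact ⟨f, fun r hr hra => hfa.trans (hfu r (subset_convexHull ℝ _ ⟨hr, hra⟩))⟩

lemma add_smul_sub_add_smul_sub_mem_of_convex {S : Set E} (hS : Convex ℝ S) {a b d : E}
    (ha : a ∈ S) (hb : b ∈ S) (hd : d ∈ S) {p q : ℝ} (hp : 0 ≤ p) (hq : 0 ≤ q) (hpq : p + q ≤ 1) :
    a + p • (b - a) + q • (d - a) ∈ S := by
  have hcomb : a + p • (b - a) + q • (d - a) = ∑ i, ![1 - (p + q), p, q] i • ![a, b, d] i := by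
    simp only [Fin.sum_univ_three, Matrix.cons_val]
    module
  rw [hcomb]
  refine hS.sum_mem (fun i _ => ?_) ?_ fun i _ => ?_
  · fin_cases i <;> simp [hp, hq, hpq]
  · simp [Fin.sum_univ_three, add_assoc]
  · fin_cases i <;> simp [ha, hb, hd]

end ExtremePoints

section Cross

/-- The oriented area of the parallelogram spanned by two vectors. -/
def crossForm : Plane →ₗ[ℝ] Plane →ₗ[ℝ] ℝ :=
  LinearMap.mk₂ ℝ (fun v w => v 0 * w 1 - v 1 * w 0)
    (fun u v w => by simp only [PiLp.add_apply]; ring)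
    (fun c v w => by simp only [PiLp.smul_apply, smul_eq_mul]; ring)
    (fun u v w => by simp only [PiLp.add_apply]; ring)
    (fun c v w => by simp only [PiLp.smul_apply, smul_eq_mul]; ring)

lemma crossForm_apply (v w : Plane) : crossForm v w = v 0 * w 1 - v 1 * w 0 := rfl

@[simp] lemma crossForm_self (v : Plane) : crossForm v v = 0 := by rw [crossForm_apply]; ring

lemma neg_crossForm (v w : Plane) : -crossForm v w = crossForm w v := by
  simp only [crossForm_apply]; ring

lemma crossForm_smul_eq (e₁ e₂ v : Plane) :
    crossForm e₁ e₂ • v = crossForm v e₂ • e₁ + crossForm e₁ v • e₂ := by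
  ext i
  fin_cases i <;> simp [crossForm_apply] <;> ring

lemma map_mul_crossForm (f : Plane →ₗ[ℝ] ℝ) (u v w : Plane) :
    f u * crossForm v w = f v * crossForm u w - f w * crossForm u v := by
  have h := congrArg f (crossForm_smul_eq v w u)
  rw [map_add, map_smul, map_smul, map_smul, ← neg_crossForm u v] at h
  simp only [smul_eq_mul] at h
  linarith

lemma exists_crossForm_ne_zero {v : Plane} (hv : v ≠ 0) : ∃ w, crossForm v w ≠ 0 := by
  by_contra! h
  have h₀ := h !₂[1, 0]
  have h₁ := h !₂[0, 1]
  refine hv (PiLp.ext fun i => ?_)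
  fin_cases i <;> simp_all [crossForm_apply]

lemma collinear_of_crossForm_eq_zero {a b c : Plane} (h : crossForm (b - a) (c - a) = 0) :
    Collinear ℝ {a, b, c} := by
  obtain rfl | hab := eq_or_ne b a
  · simpa using collinear_pair ℝ b c
  obtain ⟨w, hw⟩ := exists_crossForm_ne_zero (sub_ne_zero.2 hab)
  have hc := crossForm_smul_eq (b - a) w (c - a)
  rw [h, zero_smul, add_zero] at hc
  refine (collinear_iff_of_mem (p₀ := a) (by simp)).2 ⟨b - a, ?_⟩
  simp only [Set.mem_insert_iff, Set.mem_singleton_iff, forall_eq_or_imp, forall_eq, vadd_eq_add]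
  refine ⟨⟨0, by simp⟩, ⟨1, by simp⟩, (crossForm (b - a) w)⁻¹ * crossForm (c - a) w, ?_⟩
  rw [mul_smul, ← hc, inv_smul_smul₀ hw, sub_add_cancel]

/-- The coordinates of a vector in the basis `e₁, e₂`, multiplied by the determinant
`crossForm e₁ e₂`. -/
def wedgeCoords (e₁ e₂ : Plane) : Plane →ₗ[ℝ] ℝ × ℝ := (crossForm.flip e₂).prod (crossForm e₁)

lemma wedgeCoords_apply (e₁ e₂ v : Plane) :
    wedgeCoords e₁ e₂ v = (crossForm v e₂, crossForm e₁ v) := rfl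

lemma wedgeCoords_fst_sub_snd (e₁ e₂ v : Plane) :
    (wedgeCoords e₁ e₂ v).1 - (wedgeCoords e₁ e₂ v).2 = crossForm v (e₁ + e₂) := by
  rw [wedgeCoords_apply, ← neg_crossForm v e₁, map_add, sub_neg_eq_add, add_comm]

lemma wedgeCoords_surjective {e₁ e₂ : Plane} (h : crossForm e₁ e₂ ≠ 0) :
    Function.Surjective (wedgeCoords e₁ e₂) := fun u => by
  refine ⟨(crossForm e₁ e₂)⁻¹ • (u.1 • e₁ + u.2 • e₂), ?_⟩
  simp [wedgeCoords_apply, mul_left_comm _ _ (crossForm e₁ e₂), h]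

lemma isLinkedPair_wedgeCoords {a c e₁ e₂ f₁ f₂ : Plane} (he : e₁ + e₂ = c - a)
    (hf : f₁ + f₂ = a - c) (he₀ : crossForm e₁ e₂ ≠ 0) (hf₀ : crossForm f₁ f₂ ≠ 0) :
    IsLinkedPair a c (wedgeCoords e₁ e₂) (wedgeCoords f₁ f₂) := by
  intro x hx
  obtain ⟨v, hv⟩ := wedgeCoords_surjective he₀ x.1
  set y := wedgeCoords f₁ f₂ v with hy
  set s := (y.1 - x.2.1) / crossForm f₁ f₂
  have hs : s * crossForm f₁ f₂ = y.1 - x.2.1 := div_mul_cancel₀ _ hf₀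
  have hxy : y.1 - y.2 = x.2.1 - x.2.2 := by
    have hxv := wedgeCoords_fst_sub_snd e₁ e₂ v
    rw [hv, he, ← neg_sub a c, map_neg] at hxv
    rw [hy, wedgeCoords_fst_sub_snd, hf]
    linarith [mem_sideHyperplane.1 hx]
  have hca : c - a = -(f₁ + f₂) := by rw [hf, neg_sub]
  refine ⟨v - s • a, s, by rw [sub_add_cancel, hv], ?_⟩
  rw [sub_add_eq_add_sub, add_sub_assoc, ← smul_sub, hca, map_add, map_smul, ← hy]
  ext <;> simp [wedgeCoords_apply, hs]
  linarith

lemma IsWedgeAt.wedgeCoords_smul {S : Set Plane} {a e₁ e₂ : Plane}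
    (h : IsWedgeAt S a (wedgeCoords e₁ e₂)) {k l : ℝ} (hk : 0 < k) (hl : 0 < l) :
    IsWedgeAt S a (wedgeCoords (k • e₁) (l • e₂)) := by
  filter_upwards [h] with y hy
  rw [hy]
  simp [wedgeCoords_apply, hk, hl]

open Topology in
lemma isWedgeAt_of_convex {S : Set Plane} (hS : Convex ℝ S) {a b d : Plane} (ha : a ∈ S)
    (hb : b ∈ S) (hd : d ∈ S) (hpos : 0 < crossForm (b - a) (d - a))
    (hle : ∀ y ∈ S, 0 ≤ wedgeCoords (b - a) (d - a) (y - a)) :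
    IsWedgeAt S a (wedgeCoords (b - a) (d - a)) := by
  set D := crossForm (b - a) (d - a)
  have hsmall : ∀ᶠ y in 𝓝 a, crossForm (y - a) (d - a) + crossForm (b - a) (y - a) < D := by
    have hcont : Continuous fun y => crossForm (y - a) (d - a) + crossForm (b - a) (y - a) :=
      (LinearMap.continuous_of_finiteDimensional
        (crossForm.flip (d - a) + crossForm (b - a))).comp (continuous_id.sub continuous_const)
    exact (hcont.tendsto' a 0 (by simp)).eventually_lt_const hpos
  filter_upwards [hsmall] with y hy
  rw [← sub_nonneg, ← map_sub]
  refine ⟨hle y, fun ⟨hyd, hby⟩ => ?_⟩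
  have hya : y = a + (crossForm (y - a) (d - a) / D) • (b - a) +
      (crossForm (b - a) (y - a) / D) • (d - a) := by
    rw [div_eq_inv_mul, div_eq_inv_mul, mul_smul, mul_smul, add_assoc, ← smul_add,
      ← crossForm_smul_eq, inv_smul_smul₀ hpos.ne', add_sub_cancel]
  rw [hya]
  refine add_smul_sub_add_smul_sub_mem_of_convex hS ha hb hd (div_nonneg hyd hpos.le)
    (div_nonneg hby hpos.le) ?_
  rw [← add_div, div_le_one hpos]
  exact hy.le

end Cross

section Polygons

open Finset

/-- The cone at the vertex `a` of the convex hull of `P` is spanned by the sides from `a` to `b` and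
to `d`, in positive orientation. -/
structure IsVertexCone (P : Finset Plane) (a b d : Plane) : Prop where
  mem_vertex : a ∈ P
  mem_left : b ∈ P
  mem_right : d ∈ P
  crossForm_pos : 0 < crossForm (b - a) (d - a)
  crossForm_nonneg : ∀ r ∈ P, 0 ≤ crossForm (b - a) (r - a) ∧ 0 ≤ crossForm (r - a) (d - a)

/-- The points of `P` lie on both sides of the line from `a` to `c`. -/
def IsDiagonal (P : Finset Plane) (a c : Plane) : Prop :=
  (∃ r ∈ P, 0 < crossForm (c - a) (r - a)) ∧ ∃ r ∈ P, crossForm (c - a) (r - a) < 0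

variable {P : Finset Plane} {a b c d : Plane}

lemma IsVertexCone.left_ne (h : IsVertexCone P a b d) : b ≠ a := by
  rintro rfl
  simpa using h.crossForm_pos

lemma IsVertexCone.right_ne (h : IsVertexCone P a b d) : d ≠ a := by
  rintro rfl
  simpa using h.crossForm_pos

lemma IsDiagonal.symm (h : IsDiagonal P a c) : IsDiagonal P c a := by
  have hcross (r : Plane) : crossForm (a - c) (r - c) = -crossForm (c - a) (r - a) := by
    simp only [crossForm_apply, PiLp.sub_apply]; ring
  simpa only [IsDiagonal, hcross, Left.neg_pos_iff, Left.neg_neg_iff] using And.symm h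

lemma StrictlyConvexPosition.crossForm_ne_zero (hP : StrictlyConvexPosition P) (ha : a ∈ P)
    (hb : b ∈ P) (hc : c ∈ P) (hab : a ≠ b) (hac : a ≠ c) (hbc : b ≠ c) :
    crossForm (b - a) (c - a) ≠ 0 := fun h =>
  not_collinear_of_mem_extremePoints (hP a ha) (hP b hb) (hP c hc) hab hac hbc
    (collinear_of_crossForm_eq_zero h)

lemma exists_forall_crossForm_sub_nonneg {s : Finset Plane} (hs : s.Nonempty)
    {f : Plane →ₗ[ℝ] ℝ} (hf : ∀ r ∈ s, f a < f r) :
    ∃ b ∈ s, ∃ d ∈ s, ∀ r ∈ s,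
      0 ≤ crossForm (b - a) (r - a) ∧ 0 ≤ crossForm (r - a) (d - a) := by
  have hpos (r : Plane) (hr : r ∈ s) : 0 < f (r - a) := by
    rw [map_sub]
    exact sub_pos.2 (hf r hr)
  have ⟨n, hn⟩ := hs
  let slope (r : Plane) : ℝ := crossForm (n - a) (r - a) / f (r - a)
  obtain ⟨b, hb, hmin⟩ := s.exists_min_image slope hs
  obtain ⟨d, hd, hmax⟩ := s.exists_max_image slope hs
  have hcross {q r : Plane} (hq : q ∈ s) (hr : r ∈ s) (hqr : slope q ≤ slope r) :
      0 ≤ crossForm (q - a) (r - a) := by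
    rw [div_le_div_iff₀ (hpos q hq) (hpos r hr)] at hqr
    refine nonneg_of_mul_nonneg_right ?_ (hpos n hn)
    linarith [map_mul_crossForm f (n - a) (q - a) (r - a)]
  exact ⟨b, hb, d, hd, fun r hr => ⟨hcross hb hr (hmin r hr), hcross hr hd (hmax r hr)⟩⟩

lemma StrictlyConvexPosition.exists_isVertexCone (hP : StrictlyConvexPosition P) (hcard : 3 ≤ #P)
    (ha : a ∈ P) : ∃ b d, IsVertexCone P a b d := by
  classical
  obtain ⟨f, hf⟩ := exists_forall_lt_of_mem_extremePoints_convexHull P.finite_toSet (hP a ha)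
  have hne : (P.erase a).Nonempty := card_pos.1 (by rw [card_erase_of_mem ha]; omega)
  obtain ⟨b, hb, d, hd, hcone⟩ := exists_forall_crossForm_sub_nonneg (f := f.toLinearMap) hne
    fun r hr => hf r (mem_of_mem_erase hr) (ne_of_mem_erase hr)
  have hbd : b ≠ d := by
    rintro rfl
    obtain ⟨r, hr⟩ : ((P.erase a).erase b).Nonempty := card_pos.1 (by
      rw [card_erase_of_mem hb, card_erase_of_mem ha]; omega)
    obtain ⟨hrb, hra⟩ := mem_erase.1 hr
    refine hP.crossForm_ne_zero ha (mem_of_mem_erase hb) (mem_of_mem_erase hra)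
      (ne_of_mem_erase hb).symm (ne_of_mem_erase hra).symm hrb.symm ?_
    linarith [hcone r hra, neg_crossForm (b - a) (r - a)]
  refine ⟨b, d, ha, mem_of_mem_erase hb, mem_of_mem_erase hd, (hcone d hd).1.lt_of_ne'
    (hP.crossForm_ne_zero ha (mem_of_mem_erase hb) (mem_of_mem_erase hd)
      (ne_of_mem_erase hb).symm (ne_of_mem_erase hd).symm hbd), fun r hr => ?_⟩
  obtain rfl | hra := eq_or_ne r a
  · simp
  · exact hcone r (mem_erase.2 ⟨hra, hr⟩)

lemma IsVertexCone.wedgeCoords_nonneg (h : IsVertexCone P a b d) :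
    ∀ y ∈ convexHull ℝ (P : Set Plane), 0 ≤ wedgeCoords (b - a) (d - a) (y - a) := by
  have hsub : convexHull ℝ (P : Set Plane) ⊆
      wedgeCoords (b - a) (d - a) ⁻¹' Set.Ici (wedgeCoords (b - a) (d - a) a) := by
    refine convexHull_min (fun r hr => ?_) ((convex_Ici _).linear_preimage _)
    rw [Set.mem_preimage, Set.mem_Ici, ← sub_nonneg, ← map_sub]
    exact (h.crossForm_nonneg r hr).symm
  intro y hy
  rw [map_sub, sub_nonneg]
  exact hsub hy

lemma IsVertexCone.isWedgeAt (h : IsVertexCone P a b d) :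
    IsWedgeAt (convexHull ℝ P) a (wedgeCoords (b - a) (d - a)) :=
  isWedgeAt_of_convex (convex_convexHull ℝ _) (subset_convexHull ℝ _ h.mem_vertex)
    (subset_convexHull ℝ _ h.mem_left) (subset_convexHull ℝ _ h.mem_right) h.crossForm_pos
    h.wedgeCoords_nonneg

lemma IsVertexCone.isDiagonal (h : IsVertexCone P a b d) (hP : StrictlyConvexPosition P)
    (hc : c ∈ P) (hca : c ≠ a) (hcb : c ≠ b) (hcd : c ≠ d) : IsDiagonal P a c := by
  have ⟨hbc, hcd₀⟩ := h.crossForm_nonneg c hc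
  refine ⟨⟨d, h.mem_right, hcd₀.lt_of_ne' ?_⟩, b, h.mem_left, ?_⟩
  · exact hP.crossForm_ne_zero h.mem_vertex hc h.mem_right hca.symm h.right_ne.symm hcd
  · rw [← neg_crossForm (b - a), neg_neg_iff_pos]
    exact hbc.lt_of_ne' (hP.crossForm_ne_zero h.mem_vertex h.mem_left hc h.left_ne.symm hca.symm
      hcb.symm)

lemma IsDiagonal.crossForm_pos (hac : IsDiagonal P a c) (h : IsVertexCone P a b d) (hc : c ∈ P) :
    0 < crossForm (c - a) (d - a) ∧ 0 < crossForm (b - a) (c - a) := by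
  have hdet (r : Plane) : crossForm (b - a) (d - a) * crossForm (c - a) (r - a) =
      crossForm (c - a) (d - a) * crossForm (b - a) (r - a) -
        crossForm (b - a) (c - a) * crossForm (r - a) (d - a) := by
    simp only [crossForm_apply]; ring
  obtain ⟨⟨r, hr, hr₀⟩, q, hq, hq₀⟩ := hac
  have ⟨hbc, hcd⟩ := h.crossForm_nonneg c hc
  constructor
  · refine hcd.lt_of_ne' fun hzero : crossForm (c - a) (d - a) = 0 => ?_
    have hdr := hdet r
    rw [hzero] at hdr
    linarith [mul_pos h.crossForm_pos hr₀, mul_nonneg hbc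
      (h.crossForm_nonneg r hr).2]
  · refine hbc.lt_of_ne' fun hzero : crossForm (b - a) (c - a) = 0 => ?_
    have hdq := hdet q
    rw [hzero] at hdq
    linarith [mul_neg_of_pos_of_neg h.crossForm_pos hq₀, mul_nonneg hcd
      (h.crossForm_nonneg q hq).1]

lemma IsDiagonal.exists_isWedgeAt (hac : IsDiagonal P a c) (h : IsVertexCone P a b d)
    (hc : c ∈ P) : ∃ e₁ e₂, e₁ + e₂ = c - a ∧ 0 < crossForm e₁ e₂ ∧
      IsWedgeAt (convexHull ℝ P) a (wedgeCoords e₁ e₂) := by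
  obtain ⟨hd, hb⟩ := hac.crossForm_pos h hc
  have hD := h.crossForm_pos
  refine ⟨_, _, ?_, ?_, h.isWedgeAt.wedgeCoords_smul (div_pos hd hD) (div_pos hb hD)⟩
  · rw [div_eq_inv_mul, div_eq_inv_mul, mul_smul, mul_smul, ← smul_add, ← crossForm_smul_eq,
      inv_smul_smul₀ hD.ne']
  · simp only [map_smul, LinearMap.smul_apply, smul_eq_mul]
    positivity

lemma StrictlyConvexPosition.exists_isDiagonal (hP : StrictlyConvexPosition P)
    (hcard : 4 ≤ #P) : ∃ a ∈ P, ∃ c ∈ P, IsDiagonal P a c := by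
  obtain ⟨a, ha⟩ : P.Nonempty := card_pos.1 (by omega)
  obtain ⟨b, d, h⟩ := hP.exists_isVertexCone (by omega) ha
  obtain ⟨c, hc, hnotMem⟩ : ∃ c ∈ P, c ∉ ({a, b, d} : Finset Plane) :=
    exists_mem_notMem_of_card_lt_card (card_le_three.trans_lt hcard)
  simp only [mem_insert, mem_singleton, not_or] at hnotMem
  exact ⟨a, ha, c, hc, h.isDiagonal hP hc hnotMem.1 hnotMem.2.1 hnotMem.2.2⟩

end Polygons

theorem statement8_general (P : Finset Plane) (hcard : 4 ≤ P.card)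
    (hpos : StrictlyConvexPosition P) (m : ℕ) {α β : ℝ} (hα : 0 ≤ α) (hαβ : α < β) :
    ∃ (I : Type) (_ : Fintype I) (c : I → ℝ) (p : I → Plane) (Y : Finset Plane),
      (∀ i, c i ∈ Set.Ioo α β) ∧
        IsUnsplittableCover m (fun i => homCopy (c i) (p i) (convexHull ℝ P)) Y := by
  obtain ⟨a, ha, c, hc, hac⟩ := hpos.exists_isDiagonal hcard
  obtain ⟨_, _, ha'⟩ := hpos.exists_isVertexCone (by omega) ha
  obtain ⟨_, _, hc'⟩ := hpos.exists_isVertexCone (by omega) hc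
  obtain ⟨e₁, e₂, he, he₀, hA⟩ := hac.exists_isWedgeAt ha' hc
  obtain ⟨f₁, f₂, hf, hf₀, hC⟩ := hac.symm.exists_isWedgeAt hc' ha
  exact (isLinkedPair_wedgeCoords he hf he₀.ne' hf₀.ne').exists_isUnsplittableCover hA hC m hα hαβ

theorem statement8 (P : Finset Plane) (hcard : 4 ≤ P.card)
    (hpos : StrictlyConvexPosition P)
    (S : Set Plane) (hS : S = convexHull ℝ (P : Set Plane)) (h0 : (0 : Plane) ∈ S)
    (m : ℕ) (hm : 1 ≤ m) (ε : ℝ) (hε : 0 < ε) :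
    ∃ (I : Type) (_ : Fintype I) (c : I → ℝ) (p : I → Plane)
      (X : I → Set Plane) (Y : Finset Plane),
      -- X is a family of homothetic copies with scaling factors in (1, 1+ε):
      (∀ i, 1 < c i ∧ c i < 1 + ε) ∧ (∀ i, X i = homCopy (c i) (p i) S) ∧
      -- every point of Y lies in exactly m members of X:
      (∀ y ∈ Y, Nat.card {i : I | y ∈ X i} = m) ∧
      -- for every 2-coloring of X, some point of Y sees only one color:
      (∀ coloring : I → Bool, ∃ y ∈ Y, ∀ i i',
        y ∈ X i → y ∈ X i' → coloring i = coloring i') ∧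
      -- in particular: X is an m-fold covering of Y …
      (∀ y ∈ Y, ∃ t : Finset I, m ≤ t.card ∧ ∀ i ∈ t, (y : Plane) ∈ X i) ∧
      -- … that cannot be split into two subfamilies each covering Y:
      ¬ ∃ I₁ : Set I, (∀ y ∈ Y, ∃ i ∈ I₁, (y : Plane) ∈ X i) ∧
        (∀ y ∈ Y, ∃ i ∈ I₁ᶜ, (y : Plane) ∈ X i) := by
  subst hS
  obtain ⟨I, _, c, p, Y, hc, hcover⟩ :=
    statement8_general P hcard hpos m zero_le_one (lt_add_of_pos_right 1 hε)
  exact ⟨I, inferInstance, c, p, _, Y, hc, fun _ => rfl, hcover.card_eq,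
    hcover.exists_monochromatic, hcover.exists_finset, hcover.not_split⟩
end
end
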